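/- arXiv:0712.0731 — 2 statements merged into one kernel-verified Lean document; each statement's English description precedes it below -/
import Mathlib

section
/- Let (g_n) be a sequence of continuous, uniformly bounded functions on Ω̄ and let (u_n) be a sequence of uniformly bounded viscosity solutions of F(x,Du_n,D²u_n) + b(x)·Du_n|Du_n|^α = g_n(x) in Ω with the Neumann condition ⟨Du_n, n(x)⟩ = 0 on ∂Ω. Then the sequence (u_n) is relatively compact in C(Ω̄) (equipped with the uniform norm). -/
/-!
Compactness follows from the Arzelà–Ascoli theorem once the `u n` are known to be uniformly
equicontinuous (`exists_modulus`), which is an Ishii–Lions doubling argument up to the boundary.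

Fix `ε > 0` and let `ρ` be the defining function of `Ω`. The function
`u x - u y - M √‖x - y‖ - κ (h x + h y)`, with `h = δ sin (ρ / δ)`, is maximised on
`closure Ω × closure Ω`. The corrector `h` is bounded by `δ`, so that `κ δ` can be made of order
`ε`, while its gradient on the boundary is that of `ρ`. At a maximum point with `x ≠ y`, the
gradient of the modulus has the sign opposite to the Neumann condition up to an error controlled by
the `C²` bound of `ρ`, and the term `κ ∇h` makes this sign strict. Hence the equation, not the
boundary condition, is active at both points, also when they lie on the boundary (`exists_contact`).

The Hessians at the two points come from the theorem on sums (`theorem_on_sums`): applied on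
`E × E`, `exists_supConv_expansion` produces a point near the maximum at which a sup-convolution has
a second-order expansion. After adding a square this rests on `jensen_alexandrov` for convex
functions. There the resolvent `(id + G)⁻¹` of a subgradient selection `G` is Lipschitz, hence
differentiable almost everywhere by Rademacher's theorem, and contact points with paraboloids of
varying slopes cannot all be sent by `id + G` into the null set where it is not differentiable;
differentiability of the resolvent yields that of `G`, which integrates to a second-order expansion
of the convex function.

Since `√` is strictly concave, the resulting matrix inequality makes `Y - X` large in the direction
`x - y`, of size `M ‖x - y‖ ^ (-3/2)`, and bounds `‖Y‖` by its trace. Uniform ellipticity then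
contradicts the equation for large `M`: the errors from the variation of `F` in `x` and in the
gradient are a small multiple of this trace, and the other terms are of lower order
(`curvature_le`). Thus the doubled function is at most `2 κ δ`, which is the desired modulus up
to `ε`.
-/

open Filter Set Metric
open scoped RealInnerProductSpace Topology NNReal

noncomputable section

/-- Euclidean space `ℝ^N`. -/
abbrev EN (N : ℕ) := EuclideanSpace ℝ (Fin N)

/-- The space of `N × N` real matrices. -/
abbrev Mat (N : ℕ) := Matrix (Fin N) (Fin N) ℝ

/-- Operator (spectral) norm of a matrix, viewed as a linear map on Euclidean space. -/
noncomputable def matNorm {N : ℕ} (X : Mat N) : ℝ :=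
  ‖LinearMap.toContinuousLinearMap (Matrix.toEuclideanLin X)‖

/-- The Hessian matrix of `φ : ℝ^N → ℝ` at `x`. -/
noncomputable def hess {N : ℕ} (φ : EN N → ℝ) (x : EN N) : Mat N :=
  Matrix.of fun i j =>
    iteratedFDeriv ℝ 2 φ x ![EuclideanSpace.single i 1, EuclideanSpace.single j 1]

/-- `ρ` is a `C²` defining function for the domain `Ω` with exterior unit normal `nv`. -/
def IsC2DefiningFun {N : ℕ} (Ω : Set (EN N)) (nv : EN N → EN N) (ρ : EN N → ℝ) : Prop :=
  ContDiff ℝ 2 ρ ∧ Ω = {x | ρ x < 0} ∧ frontier Ω = {x | ρ x = 0} ∧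
    ∀ x ∈ frontier Ω, gradient ρ x ≠ 0 ∧ nv x = ‖gradient ρ x‖⁻¹ • gradient ρ x

/-- `Ω` is a bounded domain of class `C²` with exterior unit normal `nv` on `∂Ω`. -/
def IsC2Domain {N : ℕ} (Ω : Set (EN N)) (nv : EN N → EN N) : Prop :=
  IsOpen Ω ∧ IsConnected Ω ∧ Bornology.IsBounded Ω ∧ ∃ ρ : EN N → ℝ, IsC2DefiningFun Ω nv ρ

/-- `Ω` is a bounded domain of class `C¹` with exterior unit normal `nv` on `∂Ω`. -/
def IsC1Domain {N : ℕ} (Ω : Set (EN N)) (nv : EN N → EN N) : Prop :=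
  IsOpen Ω ∧ IsConnected Ω ∧ Bornology.IsBounded Ω ∧
    ∃ ρ : EN N → ℝ, ContDiff ℝ 1 ρ ∧ Ω = {x | ρ x < 0} ∧ frontier Ω = {x | ρ x = 0} ∧
      ∀ x ∈ frontier Ω, gradient ρ x ≠ 0 ∧ nv x = ‖gradient ρ x‖⁻¹ • gradient ρ x

/-- Interior sphere condition (Ω1). -/
def InteriorSphereCond {N : ℕ} (Ω : Set (EN N)) : Prop :=
  ∀ x ∈ frontier Ω, ∃ R > (0 : ℝ), ∃ y ∈ Ω, ‖x - y‖ = R ∧ Metric.ball y R ⊆ Ω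

/-- (F1): homogeneity of `F`. -/
def CondF1 {N : ℕ} (Ω : Set (EN N)) (α : ℝ) (F : EN N → EN N → Mat N → ℝ) : Prop :=
  ∀ x ∈ closure Ω, ∀ t : ℝ, t ≠ 0 → ∀ μ : ℝ, 0 ≤ μ → ∀ p : EN N, p ≠ 0 → ∀ X : Mat N,
    X.IsSymm → F x (t • p) (μ • X) = |t| ^ α * μ * F x p X

/-- (F2): uniform ellipticity of `F` with ellipticity constants `0 < a ≤ A`. -/
def CondF2 {N : ℕ} (Ω : Set (EN N)) (α a A : ℝ) (F : EN N → EN N → Mat N → ℝ) : Prop :=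
  0 < a ∧ a ≤ A ∧ ∀ x ∈ closure Ω, ∀ p : EN N, p ≠ 0 → ∀ M P : Mat N, M.IsSymm →
    P.PosSemidef →
      a * ‖p‖ ^ α * P.trace ≤ F x p (M + P) - F x p M ∧
      F x p (M + P) - F x p M ≤ A * ‖p‖ ^ α * P.trace

/-- (F3): Hölder continuity of `F` in the `x` variable. -/
def CondF3 {N : ℕ} (Ω : Set (EN N)) (α C₁ θ : ℝ) (F : EN N → EN N → Mat N → ℝ) : Prop :=
  0 < C₁ ∧ θ ∈ Set.Ioc (1/2 : ℝ) 1 ∧ ∀ x ∈ closure Ω, ∀ y ∈ closure Ω, ∀ p : EN N, p ≠ 0 →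
    ∀ X : Mat N, X.IsSymm → |F x p X - F y p X| ≤ C₁ * ‖x - y‖ ^ θ * ‖p‖ ^ α * matNorm X

/-- (F4): Hölder continuity of `F` in the gradient variable. -/
def CondF4 {N : ℕ} (Ω : Set (EN N)) (α C₂ ν : ℝ) (F : EN N → EN N → Mat N → ℝ) : Prop :=
  0 < C₂ ∧ ν ∈ Set.Ioc (1/2 : ℝ) 1 ∧ ∀ x ∈ closure Ω, ∀ p : EN N, p ≠ 0 → ∀ q : EN N,
    ‖q‖ ≤ ‖p‖ / 2 → ∀ X : Mat N, X.IsSymm →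
      |F x (p + q) X - F x p X| ≤ C₂ * ‖p‖ ^ (α - ν) * ‖q‖ ^ ν * matNorm X

/-- The Neumann boundary operator `B(x,r,p) = ⟨p, n(x)⟩`. -/
def BNeu {N : ℕ} (nv : EN N → EN N) : EN N → ℝ → EN N → ℝ := fun x _ p => ⟪p, nv x⟫

/-- Viscosity subsolution of
`F(x,Du,D²u) + b(x)·Du |Du|^α + c₀(x, u) = g(x)` in `Ω`, `B(x,u,Du) = 0` on `∂Ω`. -/
def IsSubSol {N : ℕ} (Ω : Set (EN N)) (F : EN N → EN N → Mat N → ℝ) (b : EN N → EN N)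
    (α : ℝ) (c₀ : EN N → ℝ → ℝ) (g : EN N → ℝ) (B : EN N → ℝ → EN N → ℝ)
    (u : EN N → ℝ) : Prop :=
  (∀ x₀ ∈ Ω, ∀ φ : EN N → ℝ, ContDiff ℝ 2 φ →
      IsLocalMaxOn (fun x => u x - φ x) (closure Ω) x₀ → gradient φ x₀ ≠ 0 →
      g x₀ ≤ F x₀ (gradient φ x₀) (hess φ x₀)
        + ⟪b x₀, gradient φ x₀⟫ * ‖gradient φ x₀‖ ^ α + c₀ x₀ (u x₀)) ∧
  (∀ x₀ ∈ Ω, ∀ k : ℝ, (∀ᶠ x in nhdsWithin x₀ (closure Ω), u x = k) → g x₀ ≤ c₀ x₀ k) ∧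
  (∀ x₀ ∈ frontier Ω, ∀ φ : EN N → ℝ, ContDiff ℝ 2 φ →
      IsLocalMaxOn (fun x => u x - φ x) (closure Ω) x₀ → gradient φ x₀ ≠ 0 →
      min (g x₀ - (F x₀ (gradient φ x₀) (hess φ x₀)
          + ⟪b x₀, gradient φ x₀⟫ * ‖gradient φ x₀‖ ^ α + c₀ x₀ (u x₀)))
        (B x₀ (u x₀) (gradient φ x₀)) ≤ 0) ∧
  (∀ x₀ ∈ frontier Ω, ∀ k : ℝ, (∀ᶠ x in nhdsWithin x₀ (closure Ω), u x = k) →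
      min (g x₀ - c₀ x₀ k) (B x₀ k 0) ≤ 0)

/-- Viscosity supersolution of
`F(x,Dv,D²v) + b(x)·Dv |Dv|^α + c₀(x, v) = g(x)` in `Ω`, `B(x,v,Dv) = 0` on `∂Ω`. -/
def IsSuperSol {N : ℕ} (Ω : Set (EN N)) (F : EN N → EN N → Mat N → ℝ) (b : EN N → EN N)
    (α : ℝ) (c₀ : EN N → ℝ → ℝ) (g : EN N → ℝ) (B : EN N → ℝ → EN N → ℝ)
    (v : EN N → ℝ) : Prop :=
  (∀ x₀ ∈ Ω, ∀ φ : EN N → ℝ, ContDiff ℝ 2 φ →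
      IsLocalMinOn (fun x => v x - φ x) (closure Ω) x₀ → gradient φ x₀ ≠ 0 →
      F x₀ (gradient φ x₀) (hess φ x₀)
        + ⟪b x₀, gradient φ x₀⟫ * ‖gradient φ x₀‖ ^ α + c₀ x₀ (v x₀) ≤ g x₀) ∧
  (∀ x₀ ∈ Ω, ∀ k : ℝ, (∀ᶠ x in nhdsWithin x₀ (closure Ω), v x = k) → c₀ x₀ k ≤ g x₀) ∧
  (∀ x₀ ∈ frontier Ω, ∀ φ : EN N → ℝ, ContDiff ℝ 2 φ →
      IsLocalMinOn (fun x => v x - φ x) (closure Ω) x₀ → gradient φ x₀ ≠ 0 →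
      0 ≤ max (g x₀ - (F x₀ (gradient φ x₀) (hess φ x₀)
          + ⟪b x₀, gradient φ x₀⟫ * ‖gradient φ x₀‖ ^ α + c₀ x₀ (v x₀)))
        (B x₀ (v x₀) (gradient φ x₀))) ∧
  (∀ x₀ ∈ frontier Ω, ∀ k : ℝ, (∀ᶠ x in nhdsWithin x₀ (closure Ω), v x = k) →
      0 ≤ max (g x₀ - c₀ x₀ k) (B x₀ k 0))

/-- The admissible set for the principal eigenvalue `λ̄`:
all `λ` such that there is a bounded positive supersolution of
`G(x,v,Dv,D²v) + λ v^{α+1} ≤ 0` in `Ω`, `⟨Dv, n⟩ ≥ 0` on `∂Ω`. -/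
def lamBarSet {N : ℕ} (Ω : Set (EN N)) (nv : EN N → EN N) (F : EN N → EN N → Mat N → ℝ)
    (b : EN N → EN N) (c : EN N → ℝ) (α : ℝ) : Set ℝ :=
  {lam | ∃ v : EN N → ℝ, LowerSemicontinuousOn v (closure Ω) ∧
    (∀ x ∈ closure Ω, 0 < v x) ∧ (∃ M, ∀ x ∈ closure Ω, v x ≤ M) ∧
    IsSuperSol Ω F b α (fun x r => (c x + lam) * |r| ^ α * r) (fun _ => 0) (BNeu nv) v}

/-- The admissible set for the principal eigenvalue `λ̲`:
all `λ` such that there is a bounded negative subsolution of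
`G(x,u,Du,D²u) + λ |u|^α u ≥ 0` in `Ω`, `⟨Du, n⟩ ≤ 0` on `∂Ω`. -/
def lamLowSet {N : ℕ} (Ω : Set (EN N)) (nv : EN N → EN N) (F : EN N → EN N → Mat N → ℝ)
    (b : EN N → EN N) (c : EN N → ℝ) (α : ℝ) : Set ℝ :=
  {lam | ∃ u : EN N → ℝ, UpperSemicontinuousOn u (closure Ω) ∧
    (∀ x ∈ closure Ω, u x < 0) ∧ (∃ M, ∀ x ∈ closure Ω, M ≤ u x) ∧
    IsSubSol Ω F b α (fun x r => (c x + lam) * |r| ^ α * r) (fun _ => 0) (BNeu nv) u}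

/-! ### Second-order expansions of convex functions from their subgradients -/

section ConvexExpansion

variable {V : Type*} [NormedAddCommGroup V] [InnerProductSpace ℝ V]

/-- Integration of a one-sided difference-quotient bound over `[0,1]`. -/
lemma le_of_slope_bound {φ : ℝ → ℝ} (hφ : Continuous φ) {a c K : ℝ}
    (h : ∀ t z : ℝ, 0 ≤ t → t < z → z ≤ 1 →
      φ z - φ t ≤ (a + c * z) * (z - t) + K * (z - t) ^ 2) :
    φ 1 ≤ φ 0 + a + c / 2 := by
  have key := image_le_of_liminf_slope_right_le_deriv_boundary (f := φ) (a := 0) (b := 1)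
    hφ.continuousOn (B := fun t => φ 0 + a * t + c * t ^ 2 / 2) (B' := fun t => a + c * t)
    (by simp) (by fun_prop) ?_ ?_ (x := 1) (by simp)
  · simpa using key
  · intro x _
    have h1 : HasDerivAt (fun t : ℝ => φ 0 + a * t + c * t ^ 2 / 2)
        (a * 1 + c * ((2 : ℕ) * x ^ (2 - 1) * 1) / 2) x :=
      (((hasDerivAt_id x).const_mul a).const_add (φ 0)).add
        ((((hasDerivAt_id x).pow 2).const_mul c).div_const 2)
    have h2 : a * 1 + c * ((2 : ℕ) * x ^ (2 - 1) * 1) / 2 = a + c * x := by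
      norm_num; ring
    rw [h2] at h1
    exact h1.hasDerivWithinAt
  · intro x hx r hr
    have hc : ContinuousAt (fun z : ℝ => a + c * z + K * (z - x)) x := by fun_prop
    have h1 : ∀ᶠ z in 𝓝 x, a + c * z + K * (z - x) < r := by
      apply hc.eventually_lt continuousAt_const
      simpa using hr
    have h2 : ∀ᶠ z in 𝓝[>] x, slope φ x z < r := by
      filter_upwards [h1.filter_mono nhdsWithin_le_nhds, self_mem_nhdsWithin,
        Ioo_mem_nhdsGT hx.2] with z hz1 hz2 hz3
      have hz : 0 < z - x := sub_pos.mpr hz2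
      rw [slope_def_field, div_lt_iff₀ hz]
      have := h x z hx.1 hz2 hz3.2.le
      nlinarith
    exact h2.frequently

/-- A subgradient at a point where the function is touched from above by a paraboloid equals the
slope of that paraboloid. -/
lemma subgrad_eq_of_touch {F : V → ℝ} {G : V → V}
    (hG : ∀ x y, F x + ⟪G x, y - x⟫ ≤ F y) {x l : V} {C : ℝ}
    (hup : ∀ᶠ h in 𝓝 (0 : V), F (x + h) ≤ F x + ⟪l, h⟫ + C * ‖h‖ ^ 2) : G x = l := by
  set q := G x - l with hq
  have ht : Tendsto (fun t : ℝ => t • q) (𝓝[>] 0) (𝓝 0) := by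
    have : Tendsto (fun t : ℝ => t • q) (𝓝 0) (𝓝 ((0 : ℝ) • q)) :=
      (continuous_id.smul continuous_const).tendsto 0
    rw [zero_smul] at this
    exact this.mono_left nhdsWithin_le_nhds
  have h1 : ∀ᶠ t in 𝓝[>] (0 : ℝ), ‖q‖ ^ 2 ≤ C * t * ‖q‖ ^ 2 := by
    filter_upwards [ht.eventually hup, self_mem_nhdsWithin] with t h1 h2
    have h2' : (0 : ℝ) < t := h2
    have h3 := hG x (x + t • q)
    rw [add_sub_cancel_left] at h3
    have h4 : ⟪G x, t • q⟫ - ⟪l, t • q⟫ = t * ‖q‖ ^ 2 := by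
      rw [← inner_sub_left, ← hq, inner_smul_right, real_inner_self_eq_norm_sq]
    have h5 : ‖t • q‖ ^ 2 = t ^ 2 * ‖q‖ ^ 2 := by
      rw [norm_smul, mul_pow, Real.norm_eq_abs, sq_abs]
    rw [h5] at h1
    have h6 : t * ‖q‖ ^ 2 ≤ t * (C * t * ‖q‖ ^ 2) := by nlinarith
    exact le_of_mul_le_mul_left h6 h2'
  have h2 : Tendsto (fun t : ℝ => C * t * ‖q‖ ^ 2) (𝓝[>] 0) (𝓝 0) := by
    have : Tendsto (fun t : ℝ => C * t * ‖q‖ ^ 2) (𝓝 0) (𝓝 (C * 0 * ‖q‖ ^ 2)) := by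
      apply Continuous.tendsto; fun_prop
    simp only [mul_zero, zero_mul] at this
    exact this.mono_left nhdsWithin_le_nhds
  have h3 : ‖q‖ ^ 2 ≤ 0 := ge_of_tendsto h2 h1
  have h4 : ‖q‖ = 0 := by nlinarith [norm_nonneg q]
  exact sub_eq_zero.mp (norm_eq_zero.mp h4)

/-- At a point touched from above by a paraboloid, every subgradient selection is Lipschitz at
that point. -/
lemma subgrad_lip_of_touch {F : V → ℝ} {G : V → V}
    (hG : ∀ x y, F x + ⟪G x, y - x⟫ ≤ F y) {x : V} {C : ℝ} (hC : 0 ≤ C)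
    (hup : ∀ᶠ h in 𝓝 (0 : V), F (x + h) ≤ F x + ⟪G x, h⟫ + C * ‖h‖ ^ 2) :
    ∀ᶠ h in 𝓝 (0 : V), ‖G (x + h) - G x‖ ≤ 4 * C * ‖h‖ := by
  obtain ⟨r, hr, hr'⟩ := Metric.eventually_nhds_iff.mp hup
  refine Metric.eventually_nhds_iff.mpr ⟨r / 2, by positivity, fun h hh => ?_⟩
  rw [dist_zero_right] at hh
  set d := G (x + h) - G x with hd
  by_cases hd0 : d = 0
  · rw [hd0, norm_zero]; positivity
  have hdp : 0 < ‖d‖ := norm_pos_iff.mpr hd0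
  by_cases hh0 : h = 0
  · exfalso; apply hd0; rw [hd, hh0]; simp
  have hhp : 0 < ‖h‖ := norm_pos_iff.mpr hh0
  set w := (‖h‖ / ‖d‖) • d with hw
  have hwn : ‖w‖ = ‖h‖ := by
    rw [hw, norm_smul, Real.norm_eq_abs, abs_of_pos (by positivity)]
    field_simp
  have hhw : ‖h + w‖ ≤ 2 * ‖h‖ := by
    have := norm_add_le h w
    linarith
  have h1 := hr' (y := h + w) (by rw [dist_zero_right]; linarith)
  have h2 := hG (x + h) (x + (h + w))
  have h3 := hG x (x + h)
  rw [show x + (h + w) - (x + h) = w by abel] at h2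
  rw [add_sub_cancel_left] at h3
  rw [inner_add_right] at h1
  have h4 : ⟪G (x + h), w⟫ - ⟪G x, w⟫ = ‖h‖ * ‖d‖ := by
    rw [← inner_sub_left, ← hd, hw, inner_smul_right, real_inner_self_eq_norm_sq]
    field_simp
  have h5 : ‖h + w‖ ^ 2 ≤ 4 * ‖h‖ ^ 2 := by nlinarith [norm_nonneg (h + w)]
  have h6 : C * ‖h + w‖ ^ 2 ≤ C * (4 * ‖h‖ ^ 2) := mul_le_mul_of_nonneg_left h5 hC
  have h7 : ‖h‖ * ‖d‖ ≤ ‖h‖ * (4 * C * ‖h‖) := by nlinarith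
  exact le_of_mul_le_mul_left h7 hhp

/-- If `G` is Lipschitz at `x` and `J` extends the inverse of `y ↦ y + G y`, then differentiability
of `J` at `x + G x` forces differentiability of `G` at `x`. -/
lemma subgrad_diff_of_touch [FiniteDimensional ℝ V] {G J : V → V} {x : V} {C : ℝ} {D : V →L[ℝ] V}
    (hJ : ∀ y, J (y + G y) = y)
    (hD : HasFDerivAt J D (x + G x))
    (hlip : ∀ᶠ h in 𝓝 (0 : V), ‖G (x + h) - G x‖ ≤ C * ‖h‖) :
    ∃ A : V →L[ℝ] V, ∀ τ > 0, ∀ᶠ h in 𝓝 (0 : V), ‖G (x + h) - G x - A h‖ ≤ τ * ‖h‖ := by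
  set k : V → V := fun h => h + (G (x + h) - G x) with hk
  have hkO : k =O[𝓝 0] (fun h : V => h) := by
    apply Asymptotics.IsBigO.of_bound (1 + C)
    filter_upwards [hlip] with h hh
    calc ‖k h‖ ≤ ‖h‖ + ‖G (x + h) - G x‖ := norm_add_le _ _
      _ ≤ (1 + C) * ‖h‖ := by linarith
  have hk0 : Tendsto k (𝓝 0) (𝓝 0) := hkO.trans_tendsto tendsto_id
  have ho : (fun h => h - D (k h)) =o[𝓝 0] (fun h : V => h) := by
    have h1 := (hasFDerivAt_iff_isLittleO_nhds_zero.mp hD).comp_tendsto hk0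
    refine (h1.congr_left ?_).trans_isBigO hkO
    intro h
    have e : x + G x + k h = (x + h) + G (x + h) := by simp only [hk]; abel
    simp only [Function.comp_apply]
    rw [e, hJ, hJ]; abel_nf
  have hsurj : LinearMap.range (D : V →ₗ[ℝ] V) = ⊤ := by
    rw [eq_top_iff]
    intro v _
    have hcl : IsClosed (LinearMap.range (D : V →ₗ[ℝ] V) : Set V) :=
      Submodule.closed_of_finiteDimensional _
    by_cases hv : v = 0
    · rw [hv]; exact Submodule.zero_mem _
    have hvp : 0 < ‖v‖ := norm_pos_iff.mpr hv
    have : v ∈ closure (LinearMap.range (D : V →ₗ[ℝ] V) : Set V) := by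
      rw [Metric.mem_closure_iff]
      intro e he
      have ht : Tendsto (fun t : ℝ => t • v) (𝓝[>] 0) (𝓝 0) := by
        have : Tendsto (fun t : ℝ => t • v) (𝓝 0) (𝓝 ((0 : ℝ) • v)) :=
          (continuous_id.smul continuous_const).tendsto 0
        rw [zero_smul] at this
        exact this.mono_left nhdsWithin_le_nhds
      have hb := ho.bound (c := e / (2 * ‖v‖)) (by positivity)
      obtain ⟨t, ht1, ht2⟩ := ((ht.eventually hb).and self_mem_nhdsWithin).exists
      have ht2' : (0 : ℝ) < t := ht2
      refine ⟨t⁻¹ • D (k (t • v)), ⟨t⁻¹ • k (t • v), by simp⟩, ?_⟩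
      rw [dist_eq_norm]
      have e1 : v - t⁻¹ • D (k (t • v)) = t⁻¹ • (t • v - D (k (t • v))) := by
        rw [smul_sub, smul_smul, inv_mul_cancel₀ ht2'.ne', one_smul]
      rw [e1, norm_smul, Real.norm_eq_abs, abs_of_pos (by positivity)]
      rw [norm_smul, Real.norm_eq_abs, abs_of_pos ht2'] at ht1
      calc t⁻¹ * ‖t • v - D (k (t • v))‖ ≤ t⁻¹ * (e / (2 * ‖v‖) * (t * ‖v‖)) := by gcongr
        _ = e / 2 := by field_simp
        _ < e := by linarith
    rwa [hcl.closure_eq] at this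
  have hinj : LinearMap.ker (D : V →ₗ[ℝ] V) = ⊥ :=
    LinearMap.ker_eq_bot_iff_range_eq_top.mpr hsurj
  let De : V ≃L[ℝ] V := ContinuousLinearEquiv.ofBijective D hinj hsurj
  refine ⟨(De.symm : V →L[ℝ] V) - ContinuousLinearMap.id ℝ V, fun τ hτ => ?_⟩
  have hb := ho.bound (c := τ / (‖(De.symm : V →L[ℝ] V)‖ + 1)) (by positivity)
  filter_upwards [hb] with h hh
  have e1 : G (x + h) - G x - ((De.symm : V →L[ℝ] V) - ContinuousLinearMap.id ℝ V) h
      = -(De.symm : V →L[ℝ] V) (h - D (k h)) := by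
    have e2 : De.symm (D (k h)) = k h := De.symm_apply_apply (k h)
    rw [map_sub]
    simp only [sub_apply, ContinuousLinearEquiv.coe_coe, ContinuousLinearMap.id_apply]
    rw [e2]
    simp only [hk]
    abel
  rw [e1, norm_neg]
  calc ‖(De.symm : V →L[ℝ] V) (h - D (k h))‖
      ≤ ‖(De.symm : V →L[ℝ] V)‖ * ‖h - D (k h)‖ := ContinuousLinearMap.le_opNorm _ _
    _ ≤ ‖(De.symm : V →L[ℝ] V)‖ * (τ / (‖(De.symm : V →L[ℝ] V)‖ + 1) * ‖h‖) := by gcongr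
    _ ≤ (‖(De.symm : V →L[ℝ] V)‖ + 1) * (τ / (‖(De.symm : V →L[ℝ] V)‖ + 1) * ‖h‖) := by
        gcongr; linarith
    _ = τ * ‖h‖ := by field_simp

/-- A first-order expansion of the subgradients integrates to a second-order expansion. -/
lemma second_order_of_subgrad_diff {F : V → ℝ} {G : V → V} (hF : Continuous F)
    (hG : ∀ x y, F x + ⟪G x, y - x⟫ ≤ F y) {x : V} {A : V →L[ℝ] V}
    (hA : ∀ τ > 0, ∀ᶠ h in 𝓝 (0 : V), ‖G (x + h) - G x - A h‖ ≤ τ * ‖h‖) :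
    ∀ τ > 0, ∀ᶠ h in 𝓝 (0 : V),
      |F (x + h) - F x - ⟪G x, h⟫ - ⟪A h, h⟫ / 2| ≤ τ * ‖h‖ ^ 2 := by
  intro τ hτ
  obtain ⟨r, hr, hr'⟩ := Metric.eventually_nhds_iff.mp (hA τ hτ)
  refine Metric.eventually_nhds_iff.mpr ⟨r, hr, fun h hh => ?_⟩
  rw [dist_zero_right] at hh
  have hg : ∀ t : ℝ, 0 ≤ t → t ≤ 1 →
      |⟪G (x + t • h), h⟫ - ⟪G x, h⟫ - t * ⟪A h, h⟫| ≤ τ * t * ‖h‖ ^ 2 := by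
    intro t ht0 ht1
    have hth : ‖t • h‖ = t * ‖h‖ := by rw [norm_smul, Real.norm_eq_abs, abs_of_nonneg ht0]
    have h1 := hr' (y := t • h) (by
      rw [dist_zero_right, hth]; nlinarith [norm_nonneg h])
    have h2 : ⟪G (x + t • h), h⟫ - ⟪G x, h⟫ - t * ⟪A h, h⟫
        = ⟪G (x + t • h) - G x - A (t • h), h⟫ := by
      rw [inner_sub_left, inner_sub_left, map_smul, real_inner_smul_left]
    rw [h2]
    calc _ ≤ ‖G (x + t • h) - G x - A (t • h)‖ * ‖h‖ := abs_real_inner_le_norm _ _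
      _ ≤ (τ * (t * ‖h‖)) * ‖h‖ := by rw [hth] at h1; gcongr
      _ = _ := by ring
  have hcont : Continuous (fun t : ℝ => F (x + t • h)) := by fun_prop
  have hs : ∀ t z : ℝ, F (x + t • h) + (z - t) * ⟪G (x + t • h), h⟫ ≤ F (x + z • h) := by
    intro t z
    have := hG (x + t • h) (x + z • h)
    rwa [show x + z • h - (x + t • h) = (z - t) • h by rw [sub_smul]; abel,
      inner_smul_right] at this
  have hub := le_of_slope_bound hcont (a := ⟪G x, h⟫) (c := ⟪A h, h⟫ + τ * ‖h‖ ^ 2) (K := 0) (by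
    intro t z ht htz hz
    have h1 := hs z t
    have h2 := (abs_le.mp (hg z (ht.trans htz.le) hz)).2
    have h3 : (z - t) * ⟪G (x + z • h), h⟫
        ≤ (z - t) * (⟪G x, h⟫ + (⟪A h, h⟫ + τ * ‖h‖ ^ 2) * z) :=
      mul_le_mul_of_nonneg_left (by linarith) (by linarith)
    linarith)
  have hlb := le_of_slope_bound (φ := fun t : ℝ => -F (x + t • h)) hcont.neg (a := -⟪G x, h⟫)
    (c := -⟪A h, h⟫ + τ * ‖h‖ ^ 2) (K := ⟪A h, h⟫ - τ * ‖h‖ ^ 2) (by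
    intro t z ht htz hz
    have h1 := hs t z
    have h2 := (abs_le.mp (hg t ht (htz.le.trans hz))).1
    have h3 : (z - t) * (⟪G x, h⟫ + (⟪A h, h⟫ - τ * ‖h‖ ^ 2) * t)
        ≤ (z - t) * ⟪G (x + t • h), h⟫ :=
      mul_le_mul_of_nonneg_left (by linarith) (by linarith)
    nlinarith)
  simp only [one_smul, zero_smul, add_zero] at hub hlb
  have : 0 ≤ τ * ‖h‖ ^ 2 := by positivity
  rw [abs_le]
  constructor <;> linarith

end ConvexExpansion

/-! ### The Jensen–Alexandrov lemma -/

section JensenAlexandrov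

variable {V : Type*} [NormedAddCommGroup V] [InnerProductSpace ℝ V] [FiniteDimensional ℝ V]

/-- The inverse of `x ↦ x + G x`, for a subgradient selection `G`, is nonexpansive on its domain
and therefore has a Lipschitz extension to the whole space. -/
lemma exists_resolvent {F : V → ℝ} {G : V → V} (hG : ∀ x y, F x + ⟪G x, y - x⟫ ≤ F y) :
    ∃ (K : ℝ≥0) (J : V → V), LipschitzWith K J ∧ ∀ y, J (y + G y) = y := by
  have hmono : ∀ x y, ‖x - y‖ ≤ ‖(x + G x) - (y + G y)‖ := by
    intro x y
    have h1 := hG x y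
    have h2 := hG y x
    have h3 : 0 ≤ ⟪G x - G y, x - y⟫ := by
      rw [inner_sub_left]
      have : ⟪G x, y - x⟫ = -⟪G x, x - y⟫ := by rw [← inner_neg_right, neg_sub]
      linarith
    have h4 : ‖x - y‖ * ‖x - y‖ ≤ ‖(x + G x) - (y + G y)‖ * ‖x - y‖ := by
      calc ‖x - y‖ * ‖x - y‖ = ⟪x - y, x - y⟫ := (real_inner_self_eq_norm_mul_norm _).symm
        _ ≤ ⟪x - y, x - y⟫ + ⟪G x - G y, x - y⟫ := by linarith
        _ = ⟪(x + G x) - (y + G y), x - y⟫ := by rw [← inner_add_left]; congr 1; abel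
        _ ≤ _ := real_inner_le_norm _ _
    by_cases h0 : ‖x - y‖ = 0
    · rw [h0]; positivity
    · exact le_of_mul_le_mul_right h4 (lt_of_le_of_ne (norm_nonneg _) (Ne.symm h0))
  have hinj : Function.Injective (fun x => x + G x) := by
    intro x y hxy
    have := hmono x y
    simp only at hxy
    rw [hxy, sub_self, norm_zero] at this
    exact sub_eq_zero.mp (norm_le_zero_iff.mp this)
  have hl : LipschitzOnWith 1 (Function.invFun (fun x => x + G x)) (range (fun x => x + G x)) := by
    apply LipschitzOnWith.of_dist_le_mul
    rintro _ ⟨x, rfl⟩ _ ⟨y, rfl⟩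
    rw [Function.leftInverse_invFun hinj x, Function.leftInverse_invFun hinj y]
    simpa [dist_eq_norm] using hmono x y
  obtain ⟨J, hJ, hJe⟩ := hl.extend_finite_dimension
  refine ⟨_, J, hJ, fun y => ?_⟩
  rw [← hJe ⟨y, rfl⟩]
  exact Function.leftInverse_invFun hinj y

/-- **Jensen–Alexandrov lemma.** Let `F` be convex (encoded by a subgradient selection `G`), and
let `Q` be the quadratic function with slope `P` and Hessian `S` at `x₀`. If `F - Q` is smaller on
the sphere of radius `r` than at the centre `x₀`, then the ball contains a point at which `F` has a
second-order expansion, with a slope arbitrarily close to that of `Q` and with Hessian `≤ S`. -/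
lemma jensen_alexandrov {F : V → ℝ} {G : V → V} (hF : Continuous F)
    (hG : ∀ x y, F x + ⟪G x, y - x⟫ ≤ F y) {S : V →L[ℝ] V} (hS : ∀ x y, ⟪S x, y⟫ = ⟪x, S y⟫)
    {P x₀ : V} {r m η : ℝ} (hr : 0 < r) (hm : 0 < m) (hη : 0 < η)
    (hsph : ∀ y ∈ sphere x₀ r,
      F y - (⟪P, y - x₀⟫ + ⟪S (y - x₀), y - x₀⟫ / 2) ≤ F x₀ - m) :
    ∃ x ∈ ball x₀ r, ∃ A : V →L[ℝ] V, ‖G x - (P + S (x - x₀))‖ ≤ η ∧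
      F x₀ - η * r ≤ F x - (⟪P, x - x₀⟫ + ⟪S (x - x₀), x - x₀⟫ / 2) ∧
      (∀ h, ⟪A h, h⟫ ≤ ⟪S h, h⟫) ∧
      ∀ τ > 0, ∀ᶠ h in 𝓝 (0 : V),
        |F (x + h) - F x - ⟪G x, h⟫ - ⟪A h, h⟫ / 2| ≤ τ * ‖h‖ ^ 2 := by
  obtain ⟨K, J, hJl, hJ⟩ := exists_resolvent hG
  set Q : V → ℝ := fun y => ⟪P, y - x₀⟫ + ⟪S (y - x₀), y - x₀⟫ / 2 with hQ
  have hQc : Continuous Q := by fun_prop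
  have hQe : ∀ x h, Q (x + h) = Q x + ⟪P + S (x - x₀), h⟫ + ⟪S h, h⟫ / 2 := by
    intro x h
    have e : x + h - x₀ = (x - x₀) + h := by abel
    simp only [hQ, e, map_add, inner_add_left, inner_add_right]
    have := hS h (x - x₀)
    rw [this, real_inner_comm (S (x - x₀)) h]
    ring
  -- for every small slope `p` there is an interior contact point
  set η' := min η (m / (2 * r)) with hη'
  have hη'p : 0 < η' := by positivity
  have contact : ∀ p ∈ ball (0 : V) η', ∃ x ∈ ball x₀ r,
      (∀ y ∈ closedBall x₀ r, F y - Q y - ⟪p, y - x₀⟫ ≤ F x - Q x - ⟪p, x - x₀⟫) := by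
    intro p hp
    rw [mem_ball_zero_iff] at hp
    obtain ⟨x, hx, hmax⟩ := (isCompact_closedBall x₀ r).exists_isMaxOn
      (⟨x₀, mem_closedBall_self hr.le⟩ : (closedBall x₀ r).Nonempty)
      (f := fun y => F y - Q y - ⟪p, y - x₀⟫) (by fun_prop)
    refine ⟨x, ?_, hmax⟩
    by_contra hxs
    have hxs' : x ∈ sphere x₀ r := by
      rw [mem_sphere]; rw [mem_ball] at hxs; rw [mem_closedBall] at hx
      linarith
    have h1 := hsph x hxs'
    have h2 : F x₀ - Q x₀ - ⟪p, x₀ - x₀⟫ ≤ F x - Q x - ⟪p, x - x₀⟫ :=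
      hmax (mem_closedBall_self hr.le)
    have h3 : Q x₀ = 0 := by simp [hQ]
    rw [h3, sub_self, inner_zero_right] at h2
    have h4 : |⟪p, x - x₀⟫| ≤ ‖p‖ * ‖x - x₀‖ := abs_real_inner_le_norm _ _
    have h5 : ‖x - x₀‖ = r := by rw [← dist_eq_norm]; exact hxs'
    rw [h5] at h4
    have h6 : ‖p‖ * r < m := by
      have : ‖p‖ < m / (2 * r) := hp.trans_le (min_le_right _ _)
      rw [lt_div_iff₀ (by positivity)] at this
      nlinarith [norm_nonneg p]
    have h7 := (abs_le.mp h4).1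
    change F x - Q x ≤ _ at h1
    linarith
  -- near a contact point, `F` lies below a paraboloid
  have touch : ∀ p x, x ∈ ball x₀ r →
      (∀ y ∈ closedBall x₀ r, F y - Q y - ⟪p, y - x₀⟫ ≤ F x - Q x - ⟪p, x - x₀⟫) →
      ∀ᶠ h in 𝓝 (0 : V), F (x + h) ≤ F x + ⟪P + S (x - x₀) + p, h⟫ + ⟪S h, h⟫ / 2 := by
    intro p x hx hmax
    have hc : ContinuousAt (fun h : V => x + h) 0 := by fun_prop
    have : ∀ᶠ h in 𝓝 (0 : V), x + h ∈ ball x₀ r :=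
      by
        have h0 : ball x₀ r ∈ 𝓝 (x + 0) := by rw [add_zero]; exact isOpen_ball.mem_nhds hx
        exact hc h0
    filter_upwards [this] with h hh
    have h1 := hmax (x + h) (ball_subset_closedBall hh)
    rw [hQe, show x + h - x₀ = (x - x₀) + h by abel, inner_add_right p] at h1
    rw [inner_add_left (P + S (x - x₀))]
    linarith
  have hSn : ∀ h, ⟪S h, h⟫ / 2 ≤ ‖S‖ * ‖h‖ ^ 2 := by
    intro h
    have h1 : ⟪S h, h⟫ ≤ ‖S h‖ * ‖h‖ := real_inner_le_norm _ _
    have h2 : ‖S h‖ * ‖h‖ ≤ ‖S‖ * ‖h‖ * ‖h‖ := by gcongr; exact S.le_opNorm h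
    have h3 : 0 ≤ ‖S‖ * ‖h‖ * ‖h‖ := by positivity
    nlinarith
  have slope : ∀ p x, x ∈ ball x₀ r →
      (∀ y ∈ closedBall x₀ r, F y - Q y - ⟪p, y - x₀⟫ ≤ F x - Q x - ⟪p, x - x₀⟫) →
      G x = P + S (x - x₀) + p := by
    intro p x hx hmax
    refine subgrad_eq_of_touch hG (C := ‖S‖) ?_
    filter_upwards [touch p x hx hmax] with h hh
    have := hSn h
    linarith
  -- the contact points are not all sent to the null set where `J` is not differentiable
  obtain ⟨p, hp, x, hx, hmax, hdiff⟩ : ∃ p ∈ ball (0 : V) η', ∃ x ∈ ball x₀ r,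
      (∀ y ∈ closedBall x₀ r, F y - Q y - ⟪p, y - x₀⟫ ≤ F x - Q x - ⟪p, x - x₀⟫) ∧
      DifferentiableAt ℝ J (x + G x) := by
    by_contra hcon
    push Not at hcon
    let _ : MeasurableSpace V := borel V
    have : BorelSpace V := ⟨rfl⟩
    set μ : MeasureTheory.Measure V :=
      MeasureTheory.Measure.hausdorffMeasure (Module.finrank ℝ V : ℝ) with hμ
    have hnull : μ {ξ | ¬ DifferentiableAt ℝ J ξ} = 0 := hJl.ae_differentiableAt (μ := μ)
    set Θ : V → V := fun ξ => ξ - J ξ - (P + S (J ξ - x₀)) with hΘ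
    have hΘl : ∃ K', LipschitzWith K' Θ := by
      have h1 : LipschitzWith _ (fun ξ => S (J ξ - x₀)) :=
        S.lipschitz.comp (hJl.sub (LipschitzWith.const x₀))
      exact ⟨_, (LipschitzWith.id.sub hJl).sub ((LipschitzWith.const P).add h1)⟩
    obtain ⟨K', hK'⟩ := hΘl
    have himg : μ (Θ '' {ξ | ¬ DifferentiableAt ℝ J ξ}) = 0 := by
      refine le_antisymm ?_ zero_le
      refine (hK'.hausdorffMeasure_image_le (by positivity) _).trans ?_
      rw [← hμ, hnull, mul_zero]
    have hsub : ball (0 : V) η' ⊆ Θ '' {ξ | ¬ DifferentiableAt ℝ J ξ} := by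
      intro p hp
      obtain ⟨x, hx, hmax⟩ := contact p hp
      refine ⟨x + G x, hcon p hp x hx hmax, ?_⟩
      simp only [hΘ, hJ]
      rw [slope p x hx hmax]
      abel
    have hpos : 0 < μ (ball (0 : V) η') :=
      Metric.measure_ball_pos μ 0 hη'p
    exact absurd (MeasureTheory.measure_mono_null hsub himg) hpos.ne'
  have hGx := slope p x hx hmax
  have htx := touch p x hx hmax
  rw [← hGx] at htx
  rw [mem_ball_zero_iff] at hp
  obtain ⟨A, hA⟩ := subgrad_diff_of_touch hJ hdiff.hasFDerivAt
    (subgrad_lip_of_touch hG (norm_nonneg S) (by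
      filter_upwards [htx] with h hh
      have := hSn h
      linarith))
  have hexp := second_order_of_subgrad_diff hF hG hA
  refine ⟨x, hx, A, ?_, ?_, ?_, hexp⟩
  · rw [hGx, add_sub_cancel_left]; exact (hp.trans_le (min_le_left _ _)).le
  · have h2 := hmax x₀ (mem_closedBall_self hr.le)
    have h3 : Q x₀ = 0 := by simp [hQ]
    rw [h3, sub_self, inner_zero_right] at h2
    have h4 : |⟪p, x - x₀⟫| ≤ ‖p‖ * ‖x - x₀‖ := abs_real_inner_le_norm _ _
    have h5 : ‖x - x₀‖ ≤ r := by rw [← dist_eq_norm]; exact (mem_ball.mp hx).le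
    have h6 : ‖p‖ * ‖x - x₀‖ ≤ η * r :=
      mul_le_mul (hp.trans_le (min_le_left _ _)).le h5 (norm_nonneg _) hη.le
    have h7 := (abs_le.mp h4).1
    change _ ≤ F x - Q x
    linarith
  · intro k
    by_contra hk
    push Not at hk
    have hk0 : k ≠ 0 := by rintro rfl; simp at hk
    have hkp : 0 < ‖k‖ := norm_pos_iff.mpr hk0
    set gap := ⟪A k, k⟫ - ⟪S k, k⟫ with hgap
    have hgp : 0 < gap := sub_pos.mpr hk
    have ht : Tendsto (fun t : ℝ => t • k) (𝓝[>] 0) (𝓝 0) := by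
      have : Tendsto (fun t : ℝ => t • k) (𝓝 0) (𝓝 ((0 : ℝ) • k)) :=
        (continuous_id.smul continuous_const).tendsto 0
      rw [zero_smul] at this
      exact this.mono_left nhdsWithin_le_nhds
    obtain ⟨t, ⟨h1, h2⟩, h3⟩ := ((ht.eventually ((hexp (gap / (4 * ‖k‖ ^ 2))
      (by positivity)).and htx)).and self_mem_nhdsWithin).exists
    have h3' : (0 : ℝ) < t := h3
    have h4 := (abs_le.mp h1).1
    rw [norm_smul, mul_pow, Real.norm_eq_abs, sq_abs,
      show gap / (4 * ‖k‖ ^ 2) * (t ^ 2 * ‖k‖ ^ 2) = gap / 4 * t ^ 2 by field_simp] at h4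
    simp only [map_smul, real_inner_smul_left, inner_smul_right] at h2 h4
    have h5 : t * (t * ⟪A k, k⟫) - t * (t * ⟪S k, k⟫) = gap * t ^ 2 := by rw [hgap]; ring
    have h6 : 0 < gap * t ^ 2 := by positivity
    linarith

end JensenAlexandrov

/-! ### Sup-convolutions -/

section SupConvolution

variable {V : Type*} [NormedAddCommGroup V] [InnerProductSpace ℝ V] [FiniteDimensional ℝ V]

/-- If `U` is touched from above on the compact set `K` at `x₀` by a quadratic function, then some
sup-convolution `W` of `U` has, at a suitable point `x`, a second-order expansion whose slope is
close to `P` and whose Hessian exceeds `S` by at most `τ`. The point `z` realises the supremum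
defining `W x`. -/
lemma exists_supConv_expansion {K : Set V} (hK : IsCompact K) {U : V → ℝ} (hU : ContinuousOn U K)
    {S : V →L[ℝ] V} (hS : ∀ x y, ⟪S x, y⟫ = ⟪x, S y⟫) {P x₀ : V} (hx₀ : x₀ ∈ K)
    (hloc : ∀ᶠ x in 𝓝[K] x₀, U x ≤ U x₀ + (⟪P, x - x₀⟫ + ⟪S (x - x₀), x - x₀⟫ / 2))
    {τ : ℝ} (hτ : 0 < τ) :
    ∃ ε > 0, ∃ W : V → ℝ, (∀ y, ∀ z ∈ K, U z - ‖y - z‖ ^ 2 / (2 * ε) ≤ W y) ∧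
      (∀ y, ∃ z ∈ K, W y = U z - ‖y - z‖ ^ 2 / (2 * ε)) ∧
      ∃ x, ∃ z ∈ K, W x = U z - ‖x - z‖ ^ 2 / (2 * ε) ∧ ‖z - x₀‖ < τ ∧
        ∃ p, ‖p - P‖ < τ ∧ ∃ A : V →L[ℝ] V, (∀ h, ⟪A h, h⟫ ≤ ⟪S h, h⟫ + τ * ‖h‖ ^ 2) ∧
        ∀ σ > 0, ∀ᶠ h in 𝓝 (0 : V),
          |W (x + h) - W x - ⟪p, h⟫ - ⟪A h, h⟫ / 2| ≤ σ * ‖h‖ ^ 2 := by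
  obtain ⟨r₁, hr₁, hloc'⟩ := Metric.eventually_nhds_iff.mp (eventually_nhdsWithin_iff.mp hloc)
  obtain ⟨MU, hMU⟩ := hK.exists_bound_of_continuousOn hU
  simp only [Real.norm_eq_abs] at hMU
  have hMU0 : 0 ≤ MU := (abs_nonneg _).trans (hMU x₀ hx₀)
  set Q₀ : V → ℝ := fun y => ⟪P, y - x₀⟫ + ⟪S (y - x₀), y - x₀⟫ / 2 with hQ₀
  have hQ₀c : Continuous Q₀ := by fun_prop
  set r := min (r₁ / 4) (min (τ / 4) (τ / (4 * (‖S‖ + τ)))) with hr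
  have hSτ : 0 < ‖S‖ + τ := by positivity
  have hrp : 0 < r := by positivity
  have hr1 : r ≤ r₁ / 4 := min_le_left _ _
  have hr2 : r ≤ τ / 4 := (min_le_right _ _).trans (min_le_left _ _)
  have hr3 : (‖S‖ + τ) * r ≤ τ / 4 := by
    have h : r ≤ τ / (4 * (‖S‖ + τ)) := (min_le_right _ _).trans (min_le_right _ _)
    rw [le_div_iff₀ (by positivity)] at h
    linarith
  set m := τ * r ^ 2 / 4 with hm
  have hmp : 0 < m := by positivity
  set η := τ / 4 with hη
  have hηp : 0 < η := by positivity
  set Qτ : V → ℝ := fun y => Q₀ y + τ / 2 * ‖y - x₀‖ ^ 2 with hQτ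
  have hQτc : Continuous Qτ := by fun_prop
  obtain ⟨q₀, hq₀⟩ := (isCompact_closedBall x₀ r).exists_bound_of_continuousOn hQτc.continuousOn
  simp only [Real.norm_eq_abs] at hq₀
  have hq₀0 : 0 ≤ q₀ := (abs_nonneg _).trans (hq₀ x₀ (mem_closedBall_self hrp.le))
  obtain ⟨s₁, hs₁, hs₁'⟩ := Metric.uniformContinuousOn_iff.mp
    ((isCompact_closedBall x₀ (2 * r)).uniformContinuousOn_of_continuous hQ₀c.continuousOn) m hmp
  set s := min s₁ r with hs
  have hsp : 0 < s := by positivity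
  set C := 2 * MU + q₀ + m + η * r + 1 with hC
  have hηr : 0 < η * r := by positivity
  have hCp : 0 < C := by positivity
  set ε := s ^ 2 / (2 * C) with hε
  have hεp : 0 < ε := by positivity
  have hfar : ∀ y z : V, s ≤ ‖y - z‖ → C ≤ ‖y - z‖ ^ 2 / (2 * ε) := by
    intro y z h
    rw [le_div_iff₀ (by positivity)]
    have : C * (2 * ε) = s ^ 2 := by rw [hε]; field_simp
    rw [this]
    exact pow_le_pow_left₀ hsp.le h 2
  -- the sup-convolution, through a choice of maximisers
  have hex : ∀ y, ∃ z ∈ K, ∀ z' ∈ K,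
      U z' - ‖y - z'‖ ^ 2 / (2 * ε) ≤ U z - ‖y - z‖ ^ 2 / (2 * ε) := by
    intro y
    obtain ⟨z, hz, hmax⟩ := hK.exists_isMaxOn ⟨x₀, hx₀⟩
      (f := fun z => U z - ‖y - z‖ ^ 2 / (2 * ε)) (by fun_prop)
    exact ⟨z, hz, fun z' hz' => hmax hz'⟩
  choose ζ hζK hζ using hex
  set W : V → ℝ := fun y => U (ζ y) - ‖y - ζ y‖ ^ 2 / (2 * ε) with hW
  have hWge : ∀ y, ∀ z ∈ K, U z - ‖y - z‖ ^ 2 / (2 * ε) ≤ W y := fun y z hz => hζ y z hz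
  set F : V → ℝ := fun y => W y + ‖y‖ ^ 2 / (2 * ε) with hF
  set G : V → V := fun y => ε⁻¹ • ζ y with hGd
  have hG : ∀ x y, F x + ⟪G x, y - x⟫ ≤ F y := by
    intro x y
    have h1 := hWge y (ζ x) (hζK x)
    have h2 : F x + ⟪G x, y - x⟫ = U (ζ x) - ‖y - ζ x‖ ^ 2 / (2 * ε) + ‖y‖ ^ 2 / (2 * ε) := by
      simp only [hF, hW, hGd, real_inner_smul_left, inner_sub_right]
      rw [norm_sub_sq_real, norm_sub_sq_real, real_inner_comm y, real_inner_comm x]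
      field_simp
      ring
    rw [h2]
    simp only [hF]
    linarith
  have hFc : Continuous F := by
    obtain ⟨R, hR⟩ := hK.exists_bound_of_continuousOn (f := fun z : V => z) continuousOn_id
    have hR0 : 0 ≤ R := (norm_nonneg _).trans (hR x₀ hx₀)
    have : LipschitzWith (Real.toNNReal (ε⁻¹ * R)) F := by
      apply LipschitzWith.of_le_add_mul
      intro x y
      rw [Real.coe_toNNReal _ (by positivity)]
      have h1 := hG x y
      have h2 : |⟪G x, y - x⟫| ≤ ‖G x‖ * ‖y - x‖ := abs_real_inner_le_norm _ _
      have h3 : ‖G x‖ ≤ ε⁻¹ * R := by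
        simp only [hGd]
        rw [norm_smul, Real.norm_eq_abs, abs_of_pos (by positivity)]
        have := hR (ζ x) (hζK x)
        gcongr
      have h4 := (abs_le.mp h2).1
      have h5 : ‖G x‖ * ‖y - x‖ ≤ ε⁻¹ * R * ‖y - x‖ := by gcongr
      rw [dist_eq_norm, norm_sub_rev]
      linarith
    exact this.continuous
  set S' : V →L[ℝ] V := S + (τ + ε⁻¹) • ContinuousLinearMap.id ℝ V with hS'
  have hS'a : ∀ y, S' y = S y + (τ + ε⁻¹) • y := fun y => by simp [hS']
  have hS'sym : ∀ x y, ⟪S' x, y⟫ = ⟪x, S' y⟫ := by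
    intro x y
    rw [hS'a, hS'a, inner_add_left, inner_add_right, hS, real_inner_smul_left, inner_smul_right]
  -- adding `‖y‖² / (2 ε)` to both sides turns `W` into the convex function `F`
  have hconv : ∀ y, F y - (⟪P + ε⁻¹ • x₀, y - x₀⟫ + ⟪S' (y - x₀), y - x₀⟫ / 2)
      = W y - Qτ y + ‖x₀‖ ^ 2 / (2 * ε) := by
    intro y
    have e1 : ‖y‖ ^ 2 = ‖x₀‖ ^ 2 + 2 * ⟪x₀, y - x₀⟫ + ‖y - x₀‖ ^ 2 := by
      rw [← norm_add_sq_real]; congr 2; abel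
    simp only [hF, hQτ, hQ₀, hS'a, inner_add_left, real_inner_smul_left,
      real_inner_self_eq_norm_sq]
    rw [e1]
    field_simp
    ring
  have hWx₀ : U x₀ ≤ W x₀ := by simpa using hWge x₀ x₀ hx₀
  have hQτ0 : Qτ x₀ = 0 := by simp [hQτ, hQ₀]
  have hFx₀ : F x₀ = W x₀ + ‖x₀‖ ^ 2 / (2 * ε) := rfl
  obtain ⟨x, hx, A', hgr, hct, hA', hexp⟩ := jensen_alexandrov hFc hG hS'sym
    (P := P + ε⁻¹ • x₀) (x₀ := x₀) hrp hmp hηp (by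
      intro y hy
      rw [hconv, hFx₀]
      have hyb : y ∈ closedBall x₀ r := sphere_subset_closedBall hy
      have hyr : ‖y - x₀‖ = r := by rw [← dist_eq_norm]; exact hy
      have hq := abs_le.mp (hq₀ y hyb)
      have hUz := abs_le.mp (hMU (ζ y) (hζK y))
      have hUx := abs_le.mp (hMU x₀ hx₀)
      have hWy : W y = U (ζ y) - ‖y - ζ y‖ ^ 2 / (2 * ε) := rfl
      rcases le_or_gt s ‖y - ζ y‖ with h | h
      · have := hfar y (ζ y) h
        linarith
      · have hzr : ‖ζ y - x₀‖ < 2 * r := by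
          have : ‖ζ y - x₀‖ ≤ ‖y - x₀‖ + ‖y - ζ y‖ := by
            rw [norm_sub_rev y (ζ y), add_comm]
            exact norm_sub_le_norm_sub_add_norm_sub _ _ _
          have : s ≤ r := min_le_right _ _
          linarith
        have h1 := hloc' (y := ζ y) (by rw [dist_eq_norm]; linarith) (hζK y)
        have h2 := hs₁' (ζ y) (by rw [mem_closedBall, dist_eq_norm]; exact hzr.le) y
          (by rw [mem_closedBall, dist_eq_norm]; linarith)
          (by rw [dist_eq_norm, norm_sub_rev]; exact h.trans_le (min_le_left _ _))
        rw [Real.dist_eq] at h2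
        have h3 := (abs_lt.mp h2).2
        have h4 : Qτ y = Q₀ y + τ / 2 * r ^ 2 := by simp only [hQτ, hyr]
        have h5 : 0 ≤ ‖y - ζ y‖ ^ 2 / (2 * ε) := by positivity
        change U (ζ y) ≤ U x₀ + Q₀ (ζ y) at h1
        rw [hWy, h4]
        have h6 : τ / 2 * r ^ 2 = 2 * m := by rw [hm]; ring
        linarith)
  rw [hconv, hFx₀] at hct
  have hxb : x ∈ closedBall x₀ r := ball_subset_closedBall hx
  have hxr : ‖x - x₀‖ ≤ r := by rw [← dist_eq_norm]; exact hxb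
  have hclose : ‖x - ζ x‖ < s := by
    by_contra hcon
    push Not at hcon
    have h1 := hfar x (ζ x) hcon
    have hq := abs_le.mp (hq₀ x hxb)
    have hUz := abs_le.mp (hMU (ζ x) (hζK x))
    have hUx := abs_le.mp (hMU x₀ hx₀)
    have hWy : W x = U (ζ x) - ‖x - ζ x‖ ^ 2 / (2 * ε) := rfl
    linarith
  refine ⟨ε, hεp, W, hWge, fun y => ⟨ζ y, hζK y, rfl⟩, x, ζ x, hζK x, rfl, ?_,
    ε⁻¹ • (ζ x - x), ?_, A' - ε⁻¹ • ContinuousLinearMap.id ℝ V, ?_, ?_⟩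
  · have : ‖ζ x - x₀‖ ≤ ‖x - x₀‖ + ‖x - ζ x‖ := by
      rw [norm_sub_rev x (ζ x), add_comm]
      exact norm_sub_le_norm_sub_add_norm_sub _ _ _
    have : s ≤ r := min_le_right _ _
    linarith
  · have e1 : ε⁻¹ • (ζ x - x) - P
        = (G x - (P + ε⁻¹ • x₀ + S' (x - x₀))) + (S (x - x₀) + τ • (x - x₀)) := by
      simp only [hGd, hS'a, smul_sub, add_smul]
      abel
    rw [e1]
    have h1 : ‖S (x - x₀) + τ • (x - x₀)‖ ≤ (‖S‖ + τ) * r := by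
      calc _ ≤ ‖S (x - x₀)‖ + ‖τ • (x - x₀)‖ := norm_add_le _ _
        _ ≤ ‖S‖ * ‖x - x₀‖ + τ * ‖x - x₀‖ := by
            rw [norm_smul, Real.norm_eq_abs, abs_of_pos hτ]
            gcongr; exact S.le_opNorm _
        _ = (‖S‖ + τ) * ‖x - x₀‖ := by ring
        _ ≤ _ := by gcongr
    have h2 := norm_add_le (G x - (P + ε⁻¹ • x₀ + S' (x - x₀))) (S (x - x₀) + τ • (x - x₀))
    linarith
  · intro h
    have := hA' h
    rw [hS'a] at this
    simp only [inner_add_left, real_inner_smul_left, real_inner_self_eq_norm_sq] at this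
    simp only [sub_apply, smul_apply, ContinuousLinearMap.id_apply,
      inner_sub_left, real_inner_smul_left, real_inner_self_eq_norm_sq]
    linarith
  · intro σ hσ
    filter_upwards [hexp σ hσ] with h hh
    convert hh using 2
    simp only [hF, hGd, sub_apply, smul_apply,
      ContinuousLinearMap.id_apply, inner_sub_left, real_inner_smul_left,
      real_inner_self_eq_norm_sq]
    rw [norm_add_sq_real]
    field_simp
    ring

end SupConvolution

/-! ### The theorem on sums -/

section TheoremOnSums

/-- The restriction of the quadratic form of `A` along `ι`, represented by a symmetric operator. -/
lemma exists_symm_form {E V : Type*} [NormedAddCommGroup E] [InnerProductSpace ℝ E]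
    [FiniteDimensional ℝ E] [NormedAddCommGroup V] [InnerProductSpace ℝ V]
    [FiniteDimensional ℝ V] (A : V →L[ℝ] V) (ι : E →L[ℝ] V) :
    ∃ X : E →L[ℝ] E, (∀ x y, ⟪X x, y⟫ = ⟪x, X y⟫) ∧ ∀ h, ⟪X h, h⟫ = ⟪A (ι h), ι h⟫ := by
  have : CompleteSpace E := FiniteDimensional.complete ℝ E
  have : CompleteSpace V := FiniteDimensional.complete ℝ V
  refine ⟨(1 / 2 : ℝ) • (ι.adjoint ∘L (A + A.adjoint) ∘L ι), fun x y => ?_, fun h => ?_⟩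
  · simp only [smul_apply, ContinuousLinearMap.comp_apply, add_apply, real_inner_smul_left,
      real_inner_smul_right, ContinuousLinearMap.adjoint_inner_left,
      ContinuousLinearMap.adjoint_inner_right, inner_add_left, inner_add_right]
    ring
  · simp only [smul_apply, ContinuousLinearMap.comp_apply, add_apply, real_inner_smul_left,
      ContinuousLinearMap.adjoint_inner_left, inner_add_left]
    rw [real_inner_comm (A (ι h)) (ι h)]
    ring

/-- If `t² q ≤ σ t² c` for all small `t`, for every `σ > 0`, then `q ≤ 0`: this removes the
remainders when two second-order expansions are compared. -/
lemma le_zero_of_forall_small {q c : ℝ}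
    (h : ∀ σ > 0, ∀ᶠ t : ℝ in 𝓝 0, t ^ 2 * q ≤ σ * (t ^ 2 * c)) : q ≤ 0 := by
  have h1 : ∀ σ > 0, q ≤ σ * c := by
    intro σ hσ
    have h2 : ∀ᶠ t : ℝ in 𝓝[>] 0, t ^ 2 * q ≤ σ * (t ^ 2 * c) :=
      (h σ hσ).filter_mono nhdsWithin_le_nhds
    obtain ⟨t, ht, htp⟩ := (h2.and self_mem_nhdsWithin).exists
    have htp : 0 < t := htp
    have : t ^ 2 * q ≤ t ^ 2 * (σ * c) := by linarith
    exact le_of_mul_le_mul_left this (by positivity)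
  have h3 : Tendsto (fun σ : ℝ => σ * c) (𝓝[>] 0) (𝓝 0) := by
    have : Tendsto (fun σ : ℝ => σ * c) (𝓝 0) (𝓝 (0 * c)) := by
      exact (continuous_id.mul continuous_const).tendsto 0
    rw [zero_mul] at this
    exact this.mono_left nhdsWithin_le_nhds
  exact ge_of_tendsto h3 (by filter_upwards [self_mem_nhdsWithin] with σ hσ using h1 σ hσ)

variable {E : Type*} [NormedAddCommGroup E] [InnerProductSpace ℝ E] [FiniteDimensional ℝ E]

/-- Ishii's lemma (theorem on sums), for test functions whose second-order part is of the form
`⟪T (h - k), h - k⟫ + c (‖h‖² + ‖k‖²)`. The semijets of `u` and `v` are realised by genuine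
quadratic functions touching on `K` at points close to `x₀` and `y₀`, with arbitrarily small loss
`τ`. -/
lemma theorem_on_sums {K : Set E} (hK : IsCompact K) {u v : E → ℝ} (hu : ContinuousOn u K)
    (hv : ContinuousOn v K) {T : E →L[ℝ] E} (hT : ∀ x y, ⟪T x, y⟫ = ⟪x, T y⟫) {c : ℝ}
    {P₁ P₂ x₀ y₀ : E} (hx₀ : x₀ ∈ K) (hy₀ : y₀ ∈ K)
    (hloc : ∀ᶠ z : E × E in 𝓝 (x₀, y₀), z.1 ∈ K → z.2 ∈ K →
      u z.1 - v z.2 ≤ u x₀ - v y₀ + (⟪P₁, z.1 - x₀⟫ - ⟪P₂, z.2 - y₀⟫ +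
        (⟪T ((z.1 - x₀) - (z.2 - y₀)), (z.1 - x₀) - (z.2 - y₀)⟫
          + c * (‖z.1 - x₀‖ ^ 2 + ‖z.2 - y₀‖ ^ 2)) / 2))
    {τ : ℝ} (hτ : 0 < τ) :
    ∃ z ∈ K, ∃ w ∈ K, ‖z - x₀‖ < τ ∧ ‖w - y₀‖ < τ ∧ ∃ p q : E, ‖p - P₁‖ < τ ∧ ‖q - P₂‖ < τ ∧
      ∃ X Y : E →L[ℝ] E, (∀ x y, ⟪X x, y⟫ = ⟪x, X y⟫) ∧ (∀ x y, ⟪Y x, y⟫ = ⟪x, Y y⟫) ∧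
        (∀ᶠ z' in 𝓝[K] z, u z' ≤ u z + (⟪p, z' - z⟫ + ⟪X (z' - z), z' - z⟫ / 2)) ∧
        (∀ᶠ w' in 𝓝[K] w, v w + (⟪q, w' - w⟫ + ⟪Y (w' - w), w' - w⟫ / 2) ≤ v w') ∧
        ∀ h k, ⟪X h, h⟫ - ⟪Y k, k⟫ ≤ ⟪T (h - k), h - k⟫ + (c + τ) * (‖h‖ ^ 2 + ‖k‖ ^ 2) := by
  let V := WithLp 2 (E × E)
  let e : V ≃L[ℝ] E × E := WithLp.prodContinuousLinearEquiv 2 ℝ E E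
  have he1 : ∀ x : V, (e x).1 = x.fst := fun _ => rfl
  have he2 : ∀ x : V, (e x).2 = x.snd := fun _ => rfl
  have hin : ∀ x y : V, ⟪x, y⟫ = ⟪x.fst, y.fst⟫ + ⟪x.snd, y.snd⟫ := fun x y =>
    WithLp.prod_inner_apply x y
  have hnm : ∀ x : V, ‖x‖ ^ 2 = ‖x.fst‖ ^ 2 + ‖x.snd‖ ^ 2 := WithLp.prod_norm_sq_eq_of_L2
  have : FiniteDimensional ℝ V := e.symm.toLinearEquiv.finiteDimensional
  let D : E × E →L[ℝ] E := T ∘L (ContinuousLinearMap.fst ℝ E E - ContinuousLinearMap.snd ℝ E E)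
  let S : V →L[ℝ] V := e.symm.toContinuousLinearMap ∘L
    ((D + c • ContinuousLinearMap.fst ℝ E E).prod
      (-D + c • ContinuousLinearMap.snd ℝ E E)) ∘L e.toContinuousLinearMap
  have hS1 : ∀ x : V, (S x).fst = T (x.fst - x.snd) + c • x.fst := fun x => rfl
  have hS2 : ∀ x : V, (S x).snd = -T (x.fst - x.snd) + c • x.snd := fun x => rfl
  have hSq : ∀ x : V, ⟪S x, x⟫ = ⟪T (x.fst - x.snd), x.fst - x.snd⟫
      + c * (‖x.fst‖ ^ 2 + ‖x.snd‖ ^ 2) := by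
    intro x
    rw [hin, hS1, hS2]
    simp only [inner_add_left, inner_neg_left, real_inner_smul_left, real_inner_self_eq_norm_sq,
      inner_sub_right]
    ring
  have hSsym : ∀ x y : V, ⟪S x, y⟫ = ⟪x, S y⟫ := by
    intro x y
    rw [hin, hin, hS1, hS2, hS1, hS2]
    simp only [inner_add_left, inner_neg_left, real_inner_smul_left, inner_add_right,
      inner_neg_right, real_inner_smul_right]
    have := hT (x.fst - x.snd) (y.fst - y.snd)
    simp only [inner_sub_right, inner_sub_left (𝕜 := ℝ) x.fst] at this
    linarith
  let K' : Set V := e ⁻¹' (K ×ˢ K)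
  have hK' : IsCompact K' := by
    have := (hK.prod hK).image e.symm.continuous
    rwa [ContinuousLinearEquiv.image_symm_eq_preimage] at this
  let U : V → ℝ := fun x => u x.fst - v x.snd
  have hU : ContinuousOn U K' := by
    apply ContinuousOn.sub
    · exact hu.comp (WithLp.continuous_fst 2 E E).continuousOn (fun x hx => hx.1)
    · exact hv.comp (WithLp.continuous_snd 2 E E).continuousOn (fun x hx => hx.2)
  let i₁ : E →L[ℝ] V := e.symm.toContinuousLinearMap ∘L ContinuousLinearMap.inl ℝ E E
  let i₂ : E →L[ℝ] V := e.symm.toContinuousLinearMap ∘L ContinuousLinearMap.inr ℝ E E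
  have hi11 : ∀ h, (i₁ h).fst = h := fun _ => rfl
  have hi12 : ∀ h, (i₁ h).snd = 0 := fun _ => rfl
  have hi21 : ∀ h, (i₂ h).fst = 0 := fun _ => rfl
  have hi22 : ∀ h, (i₂ h).snd = h := fun _ => rfl
  have hi1n : ∀ h, ‖i₁ h‖ ^ 2 = ‖h‖ ^ 2 := fun h => by rw [hnm, hi11, hi12]; simp
  have hi2n : ∀ h, ‖i₂ h‖ ^ 2 = ‖h‖ ^ 2 := fun h => by rw [hnm, hi21, hi22]; simp
  let X₀ : V := e.symm (x₀, y₀)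
  have hP : ∀ᶠ x in 𝓝[K'] X₀, U x ≤ U X₀ + (⟪e.symm (P₁, -P₂), x - X₀⟫
      + ⟪S (x - X₀), x - X₀⟫ / 2) := by
    rw [eventually_nhdsWithin_iff]
    have ht : Tendsto e (𝓝 X₀) (𝓝 (x₀, y₀)) := by
      have := e.continuous.tendsto X₀
      rwa [show e X₀ = (x₀, y₀) from e.apply_symm_apply _] at this
    filter_upwards [ht.eventually hloc] with x hx hxK
    have := hx hxK.1 hxK.2
    rw [hSq, hin]
    have e1 : (x - X₀).fst = x.fst - x₀ := rfl
    have e2 : (x - X₀).snd = x.snd - y₀ := rfl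
    have e3 : (e.symm (P₁, -P₂)).fst = P₁ := rfl
    have e4 : (e.symm (P₁, -P₂)).snd = -P₂ := rfl
    rw [e1, e2, e3, e4, inner_neg_left, ← sub_eq_add_neg]
    exact this
  obtain ⟨ε, hε, W, hWge, hWex, x, z, hz, hWx, hzx, p, hp, A, hA, hexp⟩ :=
    exists_supConv_expansion hK' hU hSsym (x₀ := X₀) ⟨hx₀, hy₀⟩ hP (half_pos hτ)
  have hfst : ∀ y : V, ‖y.fst‖ ≤ ‖y‖ := fun y => by
      refine le_of_sq_le_sq ?_ (norm_nonneg _)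
      rw [hnm]; nlinarith [sq_nonneg ‖y.snd‖]
  have hsnd : ∀ y : V, ‖y.snd‖ ≤ ‖y‖ := fun y => by
      refine le_of_sq_le_sq ?_ (norm_nonneg _)
      rw [hnm]; nlinarith [sq_nonneg ‖y.fst‖]
  -- shifting the maximiser together with the base point
  have htrans : ∀ h, z + h ∈ K' → U (z + h) - U z ≤ W (x + h) - W x := by
    intro h hh
    have := hWge (x + h) (z + h) hh
    rw [add_sub_add_right_eq_sub] at this
    linarith
  -- swapping the components of the maximisers
  have hsep : ∀ h k, W (x + i₁ h) + W (x + i₂ k) ≤ W (x + (i₁ h + i₂ k)) + W x := by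
    intro h k
    obtain ⟨a, ha, ha'⟩ := hWex (x + i₁ h)
    obtain ⟨b, hb, hb'⟩ := hWex (x + i₂ k)
    have h1 := hWge (x + (i₁ h + i₂ k)) (e.symm (a.fst, b.snd)) ⟨ha.1, hb.2⟩
    have h2 := hWge x (e.symm (b.fst, a.snd)) ⟨hb.1, ha.2⟩
    have e1 : (x + i₁ h - a).fst = x.fst + h - a.fst := rfl
    have e2 : (x + i₁ h - a).snd = x.snd - a.snd := by
      change x.snd + 0 - a.snd = _; rw [add_zero]
    have e3 : (x + i₂ k - b).fst = x.fst - b.fst := by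
      change x.fst + 0 - b.fst = _; rw [add_zero]
    have e4 : (x + i₂ k - b).snd = x.snd + k - b.snd := rfl
    have e5 : (x + (i₁ h + i₂ k) - e.symm (a.fst, b.snd)).fst = x.fst + h - a.fst := by
      change x.fst + (h + 0) - a.fst = _; rw [add_zero]
    have e6 : (x + (i₁ h + i₂ k) - e.symm (a.fst, b.snd)).snd = x.snd + k - b.snd := by
      change x.snd + (0 + k) - b.snd = _; rw [zero_add]
    have e7 : (x - e.symm (b.fst, a.snd)).fst = x.fst - b.fst := rfl
    have e8 : (x - e.symm (b.fst, a.snd)).snd = x.snd - a.snd := rfl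
    have e9 : U (e.symm (a.fst, b.snd)) = u a.fst - v b.snd := rfl
    have e10 : U (e.symm (b.fst, a.snd)) = u b.fst - v a.snd := rfl
    have e11 : U a = u a.fst - v a.snd := rfl
    have e12 : U b = u b.fst - v b.snd := rfl
    rw [hnm, e5, e6, e9] at h1
    rw [hnm, e7, e8, e10] at h2
    rw [hnm, e1, e2, e11] at ha'
    rw [hnm, e3, e4, e12] at hb'
    have : ∀ α β : ℝ, (α + β) / (2 * ε) = α / (2 * ε) + β / (2 * ε) := fun α β => add_div _ _ _
    rw [this] at h1 h2 ha' hb'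
    linarith
  have hsepA : ∀ h k, ⟪A (i₁ h), i₁ h⟫ + ⟪A (i₂ k), i₂ k⟫ ≤ ⟪A (i₁ h + i₂ k), i₁ h + i₂ k⟫ := by
    intro h k
    have : ⟪A (i₁ h), i₁ h⟫ + ⟪A (i₂ k), i₂ k⟫ - ⟪A (i₁ h + i₂ k), i₁ h + i₂ k⟫ ≤ 0 := by
      refine le_zero_of_forall_small
        (c := 2 * (‖i₁ h‖ ^ 2 + ‖i₂ k‖ ^ 2 + ‖i₁ h + i₂ k‖ ^ 2)) fun σ hσ => ?_
      have ht : ∀ y : V, Tendsto (fun t : ℝ => t • y) (𝓝 0) (𝓝 0) := fun y => by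
        have : Continuous fun t : ℝ => t • y := by fun_prop
        simpa using this.tendsto 0
      filter_upwards [(ht (i₁ h)).eventually (hexp σ hσ), (ht (i₂ k)).eventually (hexp σ hσ),
        (ht (i₁ h + i₂ k)).eventually (hexp σ hσ)] with t h1 h2 h3
      have h4 := hsep (t • h) (t • k)
      rw [map_smul, map_smul, ← smul_add] at h4
      have h1 := (abs_le.mp h1).1
      have h2 := (abs_le.mp h2).1
      have h3 := (abs_le.mp h3).2
      simp only [map_smul, real_inner_smul_left, real_inner_smul_right, norm_smul, mul_pow,
        Real.norm_eq_abs, sq_abs] at h1 h2 h3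
      rw [inner_add_right p] at h3
      nlinarith
    linarith
  obtain ⟨X, hXs, hX⟩ := exists_symm_form A i₁
  obtain ⟨Y, hYs, hY⟩ := exists_symm_form A i₂
  have hzz : z = i₁ z.fst + i₂ z.snd := by
    apply e.injective
    ext
    · change z.fst = z.fst + 0; rw [add_zero]
    · change z.snd = 0 + z.snd; rw [zero_add]
  let I := ContinuousLinearMap.id ℝ E
  refine ⟨z.fst, hz.1, z.snd, hz.2, ?_, ?_, p.fst, -p.snd, ?_, ?_, X + (τ / 2) • I,
    -(Y + (τ / 2) • I), ?_, ?_, ?_, ?_, ?_⟩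
  · have := hfst (z - X₀); change ‖z.fst - x₀‖ ≤ _ at this; linarith
  · have := hsnd (z - X₀); change ‖z.snd - y₀‖ ≤ _ at this; linarith
  · have := hfst (p - e.symm (P₁, -P₂)); change ‖p.fst - P₁‖ ≤ _ at this; linarith
  · have := hsnd (p - e.symm (P₁, -P₂)); change ‖p.snd - -P₂‖ ≤ _ at this
    rw [← norm_neg, show -(-p.snd - P₂) = p.snd - -P₂ by abel]; linarith
  · intro x y
    simp only [add_apply, smul_apply, I, ContinuousLinearMap.id_apply, inner_add_left,
      inner_add_right, real_inner_smul_left, real_inner_smul_right, hXs]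
  · intro x y
    simp only [neg_apply, add_apply, smul_apply, I, ContinuousLinearMap.id_apply, inner_add_left,
      inner_add_right, real_inner_smul_left, real_inner_smul_right, hYs, inner_neg_left,
      inner_neg_right]
  · rw [eventually_nhdsWithin_iff]
    have ht : Tendsto (fun z' => i₁ (z' - z.fst)) (𝓝 z.fst) (𝓝 0) := by
      have : Continuous fun z' => i₁ (z' - z.fst) := by fun_prop
      simpa using this.tendsto z.fst
    filter_upwards [ht.eventually (hexp (τ / 4) (by positivity))] with z' h1 hz'
    have e1 : (z + i₁ (z' - z.fst)).fst = z' := by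
      change z.fst + (z' - z.fst) = z'; abel
    have e2 : (z + i₁ (z' - z.fst)).snd = z.snd := by
      change z.snd + 0 = z.snd; rw [add_zero]
    have h2 := htrans (i₁ (z' - z.fst)) ⟨by rw [he1, e1]; exact hz', by rw [he2, e2]; exact hz.2⟩
    simp only [U] at h2
    rw [e1, e2] at h2
    have h1 := (abs_le.mp h1).2
    rw [hi1n, hin, hi11, hi12, inner_zero_right] at h1
    simp only [add_apply, smul_apply, I, ContinuousLinearMap.id_apply, inner_add_left,
      real_inner_smul_left, real_inner_self_eq_norm_sq, hX]
    linarith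
  · rw [eventually_nhdsWithin_iff]
    have ht : Tendsto (fun z' => i₂ (z' - z.snd)) (𝓝 z.snd) (𝓝 0) := by
      have : Continuous fun z' => i₂ (z' - z.snd) := by fun_prop
      simpa using this.tendsto z.snd
    filter_upwards [ht.eventually (hexp (τ / 4) (by positivity))] with z' h1 hz'
    have e1 : (z + i₂ (z' - z.snd)).snd = z' := by
      change z.snd + (z' - z.snd) = z'; abel
    have e2 : (z + i₂ (z' - z.snd)).fst = z.fst := by
      change z.fst + 0 = z.fst; rw [add_zero]
    have h2 := htrans (i₂ (z' - z.snd)) ⟨by rw [he1, e2]; exact hz.1, by rw [he2, e1]; exact hz'⟩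
    simp only [U] at h2
    rw [e1, e2] at h2
    have h1 := (abs_le.mp h1).2
    rw [hi2n, hin, hi21, hi22, inner_zero_right] at h1
    simp only [neg_apply, add_apply, smul_apply, I, ContinuousLinearMap.id_apply, inner_add_left,
      real_inner_smul_left, real_inner_self_eq_norm_sq, hY, inner_neg_left]
    linarith
  · intro h k
    have h1 := hsepA h k
    have h2 := hA (i₁ h + i₂ k)
    have e1 : (i₁ h + i₂ k).fst = h := by change h + 0 = h; rw [add_zero]
    have e2 : (i₁ h + i₂ k).snd = k := by change 0 + k = k; rw [zero_add]
    rw [hSq, hnm, e1, e2] at h2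
    simp only [neg_apply, add_apply, smul_apply, I, ContinuousLinearMap.id_apply, inner_add_left,
      real_inner_smul_left, real_inner_self_eq_norm_sq, hY, hX, inner_neg_left]
    linarith

end TheoremOnSums

/-! ### Matrices of operators and quadratic functions -/

section QuadraticTestFunctions

variable {N : ℕ}

/-- The matrix of a linear operator on `ℝ^N` in the standard basis. -/
def matOf (X : EN N →L[ℝ] EN N) : Mat N := Matrix.toEuclideanLin.symm (X : EN N →ₗ[ℝ] EN N)

lemma toEuclideanLin_matOf (X : EN N →L[ℝ] EN N) :
    Matrix.toEuclideanLin (matOf X) = (X : EN N →ₗ[ℝ] EN N) :=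
  Matrix.toEuclideanLin.apply_symm_apply _

lemma matNorm_matOf (X : EN N →L[ℝ] EN N) : matNorm (matOf X) = ‖X‖ := by
  rw [matNorm, toEuclideanLin_matOf]
  rfl

lemma matOf_add (X Y : EN N →L[ℝ] EN N) : matOf (X + Y) = matOf X + matOf Y := by
  simp [matOf]

lemma matOf_apply (X : EN N →L[ℝ] EN N) (i j : Fin N) :
    matOf X i j = X (EuclideanSpace.single j 1) i := by
  have h : (X : EN N →ₗ[ℝ] EN N) (EuclideanSpace.single j 1)
      = Matrix.toEuclideanLin (matOf X) (EuclideanSpace.single j 1) := by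
    rw [toEuclideanLin_matOf]
  have h' : X (EuclideanSpace.single j 1)
      = Matrix.toEuclideanLin (matOf X) (EuclideanSpace.single j 1) := h
  rw [h']
  simp [Matrix.toLpLin_apply]

lemma matOf_isSymm {X : EN N →L[ℝ] EN N} (hX : ∀ x y, ⟪X x, y⟫ = ⟪x, X y⟫) :
    (matOf X).IsSymm := by
  ext i j
  have := hX (EuclideanSpace.single i 1) (EuclideanSpace.single j 1)
  rw [EuclideanSpace.inner_single_left, EuclideanSpace.inner_single_right] at this
  rw [Matrix.transpose_apply, matOf_apply, matOf_apply]
  simpa using this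

lemma matOf_posSemidef {X : EN N →L[ℝ] EN N} (hX : ∀ x y, ⟪X x, y⟫ = ⟪x, X y⟫)
    (h0 : ∀ x, 0 ≤ ⟪X x, x⟫) : (matOf X).PosSemidef := by
  rw [← Matrix.isPositive_toEuclideanLin_iff, toEuclideanLin_matOf]
  refine ⟨fun x y => hX x y, fun x => ?_⟩
  simpa using h0 x

lemma trace_matOf (X : EN N →L[ℝ] EN N) :
    (matOf X).trace = LinearMap.trace ℝ (EN N) (X : EN N →ₗ[ℝ] EN N) := by
  rw [LinearMap.trace_eq_sum_inner _ (EuclideanSpace.basisFun (Fin N) ℝ), Matrix.trace]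
  refine Finset.sum_congr rfl fun i _ => ?_
  rw [Matrix.diag_apply, matOf_apply, EuclideanSpace.basisFun_apply,
    EuclideanSpace.inner_single_left]
  simp

lemma trace_matOf_id (c : ℝ) : (matOf (c • ContinuousLinearMap.id ℝ (EN N))).trace = c * N := by
  rw [trace_matOf]
  have : ((c • ContinuousLinearMap.id ℝ (EN N) : EN N →L[ℝ] EN N) : EN N →ₗ[ℝ] EN N)
    = c • LinearMap.id := rfl
  rw [this, map_smul, LinearMap.trace_id]
  simp

/-- A positive quadratic form is bounded by its trace, as seen by completing `ξ` to an orthogonal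
basis. -/
lemma inner_le_trace {X : EN N →L[ℝ] EN N} (h0 : ∀ x, 0 ≤ ⟪X x, x⟫) (ξ : EN N) :
    ⟪X ξ, ξ⟫ ≤ (matOf X).trace * ‖ξ‖ ^ 2 := by
  rcases eq_or_ne ξ 0 with rfl | hξ
  · simp
  have hn : 0 < ‖ξ‖ := norm_pos_iff.mpr hξ
  have ho : Orthonormal ℝ ((↑) : ({‖ξ‖⁻¹ • ξ} : Set (EN N)) → EN N) := by
    rw [orthonormal_subtype_iff_ite]
    intro v hv w hw
    rw [mem_singleton_iff] at hv hw
    subst hv; subst hw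
    rw [if_pos rfl, real_inner_self_eq_norm_sq, norm_smul, norm_inv, norm_norm]
    field_simp
  obtain ⟨s, b, hs, hb⟩ := ho.exists_orthonormalBasis_extension
  have hmem : ‖ξ‖⁻¹ • ξ ∈ s := hs rfl
  have h1 : ⟪X (‖ξ‖⁻¹ • ξ), ‖ξ‖⁻¹ • ξ⟫ ≤ (matOf X).trace := by
    rw [trace_matOf, LinearMap.trace_eq_sum_inner _ b]
    have h2 := Finset.single_le_sum (f := fun i => ⟪b i, (X : EN N →ₗ[ℝ] EN N) (b i)⟫)
      (fun i _ => by rw [real_inner_comm]; exact h0 _) (Finset.mem_univ ⟨_, hmem⟩)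
    refine le_trans (le_of_eq ?_) h2
    simp only [hb]
    rw [real_inner_comm]
    rfl
  rw [map_smul, real_inner_smul_left, real_inner_smul_right] at h1
  have : ⟪X ξ, ξ⟫ = ‖ξ‖⁻¹ * (‖ξ‖⁻¹ * ⟪X ξ, ξ⟫) * ‖ξ‖ ^ 2 := by field_simp
  rw [this]
  gcongr

lemma opNorm_le_of_form {X : EN N →L[ℝ] EN N} (hX : ∀ x y, ⟪X x, y⟫ = ⟪x, X y⟫) {c : ℝ}
    (hc : 0 ≤ c) (h : ∀ x, |⟪X x, x⟫| ≤ c * ‖x‖ ^ 2) : ‖X‖ ≤ c := by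
  rw [ContinuousLinearMap.norm_eq_iSup_rayleighQuotient (T := X) (fun x y => hX x y)]
  refine ciSup_le fun x => ?_
  rw [ContinuousLinearMap.rayleighQuotient, ContinuousLinearMap.reApplyInnerSelf_apply, abs_div,
    abs_of_nonneg (sq_nonneg ‖x‖)]
  exact div_le_of_le_mul₀ (sq_nonneg _) hc (h x)

/-- The quadratic function with value `0`, gradient `p` and Hessian `X` at `z`. -/
def quadFun (p z : EN N) (X : EN N →L[ℝ] EN N) (x : EN N) : ℝ :=
  ⟪p, x - z⟫ + ⟪X (x - z), x - z⟫ / 2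

lemma contDiff_quadFun (p z : EN N) (X : EN N →L[ℝ] EN N) : ContDiff ℝ 2 (quadFun p z X) := by
  unfold quadFun
  have h1 : ContDiff ℝ 2 fun x : EN N => x - z := contDiff_id.sub contDiff_const
  exact (contDiff_const.inner ℝ h1).add (((X.contDiff.comp h1).inner ℝ h1).div_const 2)

lemma hasFDerivAt_quadFun (p z : EN N) {X : EN N →L[ℝ] EN N}
    (hX : ∀ x y, ⟪X x, y⟫ = ⟪x, X y⟫) (x : EN N) :
    HasFDerivAt (quadFun p z X) (innerSL ℝ (p + X (x - z))) x := by
  have h1 : HasFDerivAt (fun x : EN N => x - z) (ContinuousLinearMap.id ℝ (EN N)) x :=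
    (hasFDerivAt_id x).sub_const z
  have h2 := (hasFDerivAt_const p x).inner ℝ h1
  have h3 := ((X.hasFDerivAt (x := x - z)).comp x h1).inner ℝ h1
  have h4 := h2.add (h3.mul_const (1 / 2))
  refine (h4.congr_fderiv ?_).congr_of_eventuallyEq ?_
  · ext y
    simp [fderivInnerCLM_apply]
    have := hX (x - z) y
    have h5 := real_inner_comm (X y) (x - z)
    simp only [map_sub, inner_sub_left, inner_sub_right] at this h5 ⊢
    linarith
  · refine Eventually.of_forall fun y => ?_
    simp [quadFun, div_eq_mul_inv]

lemma gradient_quadFun (p z : EN N) {X : EN N →L[ℝ] EN N}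
    (hX : ∀ x y, ⟪X x, y⟫ = ⟪x, X y⟫) : gradient (quadFun p z X) z = p := by
  apply HasGradientAt.gradient
  rw [hasGradientAt_iff_hasFDerivAt]
  have := hasFDerivAt_quadFun p z hX z
  rw [sub_self, map_zero, add_zero] at this
  exact this

lemma hess_quadFun (p z : EN N) {X : EN N →L[ℝ] EN N}
    (hX : ∀ x y, ⟪X x, y⟫ = ⟪x, X y⟫) : hess (quadFun p z X) z = matOf X := by
  have h1 : fderiv ℝ (quadFun p z X) = fun x => innerSL ℝ (p + X (x - z)) :=
    funext fun x => (hasFDerivAt_quadFun p z hX x).fderiv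
  have h2 : HasFDerivAt (fun x => innerSL ℝ (p + X (x - z)))
      ((innerSL ℝ : EN N →L[ℝ] EN N →L[ℝ] ℝ) ∘L X) z := by
    have h3 : HasFDerivAt (fun x => p + X (x - z)) X z := by
      have h4 : HasFDerivAt (fun x : EN N => x - z) (ContinuousLinearMap.id ℝ (EN N)) z :=
        (hasFDerivAt_id z).sub_const z
      exact ((X.hasFDerivAt (x := z - z)).comp (f := fun x => x - z) z h4).const_add p
    exact (innerSL ℝ : EN N →L[ℝ] EN N →L[ℝ] ℝ).hasFDerivAt.comp z h3
  ext i j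
  rw [hess, Matrix.of_apply, iteratedFDeriv_two_apply, h1, h2.fderiv]
  rw [← (matOf_isSymm hX).apply i j, matOf_apply]
  change ⟪X (EuclideanSpace.single i 1), EuclideanSpace.single j 1⟫ = _
  rw [EuclideanSpace.inner_single_right]
  simp

end QuadraticTestFunctions

/-! ### Viscosity inequalities for quadratic functions; expansion of the modulus -/

section TestFunctionPreliminaries

variable {N : ℕ}

/-- A subsolution touched from above by a quadratic function satisfies the equation inequality, also
at boundary points when the slope violates the Neumann inequality. -/
lemma IsSubSol.of_touch {Ω : Set (EN N)} {nv : EN N → EN N}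
    {F : EN N → EN N → Mat N → ℝ} {b : EN N → EN N} {α : ℝ} {g u : EN N → ℝ}
    (h : IsSubSol Ω F b α (fun _ _ => 0) g (BNeu nv) u) {z p : EN N} (hz : z ∈ closure Ω)
    (hp : p ≠ 0) {X : EN N →L[ℝ] EN N} (hX : ∀ x y, ⟪X x, y⟫ = ⟪x, X y⟫)
    (ht : ∀ᶠ z' in 𝓝[closure Ω] z, u z' ≤ u z + (⟪p, z' - z⟫ + ⟪X (z' - z), z' - z⟫ / 2))
    (hn : z ∈ frontier Ω → 0 < ⟪p, nv z⟫) :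
    g z ≤ F z p (matOf X) + ⟪b z, p⟫ * ‖p‖ ^ α := by
  have hmax : IsLocalMaxOn (fun x => u x - quadFun p z X x) (closure Ω) z := by
    filter_upwards [ht] with z' h'
    simp only [quadFun, sub_self, inner_zero_right, map_zero]
    linarith
  have hg := gradient_quadFun p z hX
  have hh := hess_quadFun p z hX
  have hp' : gradient (quadFun p z X) z ≠ 0 := by rwa [hg]
  rw [closure_eq_self_union_frontier] at hz
  rcases hz with hz | hz
  · have := h.1 z hz _ (contDiff_quadFun p z X) hmax hp'
    rwa [hg, hh, add_zero] at this
  · have := h.2.2.1 z hz _ (contDiff_quadFun p z X) hmax hp'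
    rw [hg, hh, add_zero] at this
    rcases min_le_iff.mp this with h1 | h1
    · linarith
    · exact absurd h1 (not_le.mpr (hn hz))

/-- A supersolution touched from below by a quadratic function satisfies the equation inequality,
also at boundary points when the slope violates the Neumann inequality. -/
lemma IsSuperSol.of_touch {Ω : Set (EN N)} {nv : EN N → EN N}
    {F : EN N → EN N → Mat N → ℝ} {b : EN N → EN N} {α : ℝ} {g u : EN N → ℝ}
    (h : IsSuperSol Ω F b α (fun _ _ => 0) g (BNeu nv) u) {z p : EN N} (hz : z ∈ closure Ω)
    (hp : p ≠ 0) {X : EN N →L[ℝ] EN N} (hX : ∀ x y, ⟪X x, y⟫ = ⟪x, X y⟫)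
    (ht : ∀ᶠ z' in 𝓝[closure Ω] z, u z + (⟪p, z' - z⟫ + ⟪X (z' - z), z' - z⟫ / 2) ≤ u z')
    (hn : z ∈ frontier Ω → ⟪p, nv z⟫ < 0) :
    F z p (matOf X) + ⟪b z, p⟫ * ‖p‖ ^ α ≤ g z := by
  have hmin : IsLocalMinOn (fun x => u x - quadFun p z X x) (closure Ω) z := by
    filter_upwards [ht] with z' h'
    simp only [quadFun, sub_self, inner_zero_right, map_zero]
    linarith
  have hg := gradient_quadFun p z hX
  have hh := hess_quadFun p z hX
  have hp' : gradient (quadFun p z X) z ≠ 0 := by rwa [hg]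
  rw [closure_eq_self_union_frontier] at hz
  rcases hz with hz | hz
  · have := h.1 z hz _ (contDiff_quadFun p z X) hmin hp'
    rwa [hg, hh, add_zero] at this
  · have := h.2.2.1 z hz _ (contDiff_quadFun p z X) hmin hp'
    rw [hg, hh, add_zero] at this
    rcases le_max_iff.mp this with h1 | h1
    · linarith
    · exact absurd h1 (not_le.mpr (hn hz))

lemma ContDiff.continuous_gradient {f : EN N → ℝ} (hf : ContDiff ℝ 2 f) :
    Continuous (gradient f) :=
  (InnerProductSpace.toDual ℝ (EN N)).symm.continuous.comp
    (hf.continuous_fderiv (by norm_num))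

lemma inner_gradient_eq_fderiv (f : EN N → ℝ) (x y : EN N) :
    ⟪gradient f x, y⟫ = fderiv ℝ f x y := by
  rw [gradient, InnerProductSpace.toDual_symm_apply]

/-- First-order Taylor expansion with a quadratic remainder, uniform on balls. -/
lemma exists_taylor_bound {f : EN N → ℝ} (hf : ContDiff ℝ 2 f) (R : ℝ) :
    ∃ C, 0 ≤ C ∧ (∀ x ∈ closedBall (0 : EN N) R, ‖gradient f x‖ ≤ C) ∧
      ∀ x ∈ closedBall (0 : EN N) R, ∀ y ∈ closedBall (0 : EN N) R,
        |f y - f x - ⟪gradient f x, y - x⟫| ≤ C * ‖y - x‖ ^ 2 := by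
  have hcf : ContDiff ℝ 1 (fderiv ℝ f) := hf.fderiv_right (by norm_num)
  obtain ⟨C₁, hC₁⟩ := (isCompact_closedBall (0 : EN N) R).exists_bound_of_continuousOn
    hf.continuous_gradient.continuousOn
  obtain ⟨C₂, hC₂⟩ := (isCompact_closedBall (0 : EN N) R).exists_bound_of_continuousOn
    (hcf.continuous_fderiv one_ne_zero).continuousOn
  refine ⟨max 0 (max C₁ C₂), le_max_left _ _, fun x hx => (hC₁ x hx).trans
    ((le_max_left _ _).trans (le_max_right _ _)), fun x hx y hy => ?_⟩
  set C := max 0 (max C₁ C₂)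
  have hC0 : 0 ≤ C := le_max_left _ _
  have hC : ∀ x ∈ closedBall (0 : EN N) R, ‖fderiv ℝ (fderiv ℝ f) x‖ ≤ C := fun x hx =>
    (hC₂ x hx).trans ((le_max_right _ _).trans (le_max_right _ _))
  have hseg : segment ℝ x y ⊆ closedBall (0 : EN N) R :=
    (convex_closedBall _ _).segment_subset hx hy
  have hlip : ∀ w ∈ segment ℝ x y, ‖fderiv ℝ f w - fderiv ℝ f x‖ ≤ C * ‖y - x‖ := by
    intro w hw
    have h1 := (convex_closedBall (0 : EN N) R).norm_image_sub_le_of_norm_fderiv_le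
      (fun z _ => (hcf.differentiable one_ne_zero) z) hC hx (hseg hw)
    have h2 : ‖w - x‖ ≤ ‖y - x‖ := by
      have := norm_sub_le_of_mem_segment hw
      exact this
    exact h1.trans (by gcongr)
  have h3 := (convex_segment x y).norm_image_sub_le_of_norm_fderiv_le'
    (fun z _ => (hf.differentiable two_ne_zero) z) hlip (left_mem_segment ℝ x y)
    (right_mem_segment ℝ x y)
  rw [Real.norm_eq_abs] at h3
  rw [inner_gradient_eq_fderiv, sq, ← mul_assoc]
  exact h3

/-- The fourth power of the inequality in `sqrt_norm_add_le`, with `a` and `b` the normalised radial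
and squared full increments. -/
lemma one_add_le_pow_four {a b : ℝ} (hab : a ^ 2 ≤ b) (hb : b ≤ 1 / 1024) :
    0 ≤ 1 + a / 2 + (9 / 32 * b - 3 / 8 * a ^ 2) ∧
      1 + 2 * a + b ≤ (1 + a / 2 + (9 / 32 * b - 3 / 8 * a ^ 2)) ^ 4 := by
  have ha : |a| ≤ 1 / 32 := by
    apply abs_le_of_sq_le_sq _ (by norm_num)
    linarith
  have hb0 : 0 ≤ b := (sq_nonneg a).trans hab
  obtain ⟨ha1, ha2⟩ := abs_le.mp ha
  set β := 9 / 32 * b - 3 / 8 * a ^ 2 with hβ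
  have hβ1 : β ≤ 3 / 8 * b := by nlinarith [sq_nonneg a]
  have hβ2 : -(3 / 8 * b) ≤ β := by nlinarith [sq_nonneg a]
  have haβ : |a * β| ≤ 1 / 32 * (3 / 8 * b) := by
    rw [abs_mul]
    exact mul_le_mul ha (abs_le.mpr ⟨hβ2, hβ1⟩) (abs_nonneg _) (by norm_num)
  obtain ⟨h1, h2⟩ := abs_le.mp haβ
  set c := 9 / 16 * b - a ^ 2 / 2 + a * β with hc
  have hc1 : c ≤ b := by nlinarith [sq_nonneg a]
  have hc2 : -b ≤ c := by nlinarith [sq_nonneg a]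
  have hac : |a * c| ≤ 1 / 32 * b := by
    rw [abs_mul]
    exact mul_le_mul ha (abs_le.mpr ⟨hc2, hc1⟩) (abs_nonneg _) (by norm_num)
  obtain ⟨h3, h4⟩ := abs_le.mp hac
  refine ⟨by linarith, ?_⟩
  have hy2 : 1 + a + c ≤ (1 + a / 2 + β) ^ 2 := by
    have : (1 + a / 2 + β) ^ 2 = 1 + a + c + β ^ 2 := by rw [hc, hβ]; ring
    nlinarith [sq_nonneg β]
  have hpos : 0 ≤ 1 + a + c := by linarith
  have hy4 : (1 + a + c) ^ 2 ≤ (1 + a / 2 + β) ^ 4 := by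
    calc (1 + a + c) ^ 2 ≤ ((1 + a / 2 + β) ^ 2) ^ 2 := pow_le_pow_left₀ hpos hy2 2
      _ = _ := by ring
  have : 1 + 2 * a + b ≤ (1 + a + c) ^ 2 := by
    have : (1 + a + c) ^ 2 = 1 + 2 * a + a ^ 2 + 2 * c + 2 * (a * c) + c ^ 2 := by ring
    nlinarith [sq_nonneg c]
  linarith

/-- Second-order upper expansion of `√‖·‖` at `d ≠ 0`: the Hessian is strictly negative in the
radial direction. -/
lemma sqrt_norm_add_le {d : EN N} (hd : d ≠ 0) :
    ∀ᶠ k in 𝓝 (0 : EN N), √‖d + k‖ ≤ √‖d‖ + (2 * √‖d‖)⁻¹ * ⟪‖d‖⁻¹ • d, k⟫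
      + (2 * √‖d‖)⁻¹ / ‖d‖ * (9 / 8 * ‖k‖ ^ 2 - 3 / 2 * ⟪‖d‖⁻¹ • d, k⟫ ^ 2) / 2 := by
  have hr : 0 < ‖d‖ := norm_pos_iff.mpr hd
  have hball : ball (0 : EN N) (‖d‖ / 32) ∈ 𝓝 0 := ball_mem_nhds _ (by positivity)
  filter_upwards [hball] with k hk
  rw [mem_ball_zero_iff] at hk
  set r := ‖d‖ with hrd
  set s := √r with hs
  have hsp : 0 < s := Real.sqrt_pos.mpr hr
  have hsr : s ^ 2 = r := Real.sq_sqrt hr.le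
  set i := ⟪r⁻¹ • d, k⟫ with hi
  have hik : |i| ≤ ‖k‖ := by
    have := abs_real_inner_le_norm (r⁻¹ • d) k
    rw [norm_smul, norm_inv, Real.norm_eq_abs, abs_of_pos hr, ← hrd, inv_mul_cancel₀ hr.ne',
      one_mul] at this
    exact this
  have hab : (i / r) ^ 2 ≤ ‖k‖ ^ 2 / r ^ 2 := by
    rw [div_pow]
    gcongr ?_ / _
    rw [← sq_abs]
    gcongr
  have hb : ‖k‖ ^ 2 / r ^ 2 ≤ 1 / 1024 := by
    rw [div_le_iff₀ (by positivity)]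
    calc ‖k‖ ^ 2 ≤ (r / 32) ^ 2 := by gcongr
      _ = _ := by ring
  obtain ⟨h1, h2⟩ := one_add_le_pow_four hab hb
  set y := 1 + i / r / 2 + (9 / 32 * (‖k‖ ^ 2 / r ^ 2) - 3 / 8 * (i / r) ^ 2) with hy
  have hrhs : s + (2 * s)⁻¹ * i + (2 * s)⁻¹ / r * (9 / 8 * ‖k‖ ^ 2 - 3 / 2 * i ^ 2) / 2
      = s * y := by
    rw [hy, ← hsr]
    field_simp
    ring
  rw [hrhs]
  apply Real.sqrt_le_left (by positivity) |>.mpr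
  apply le_of_sq_le_sq _ (by positivity)
  have hn : ‖d + k‖ ^ 2 = r ^ 2 * (1 + 2 * (i / r) + ‖k‖ ^ 2 / r ^ 2) := by
    rw [norm_add_sq_real]
    have : ⟪d, k⟫ = r * i := by
      rw [hi, real_inner_smul_left, mul_inv_cancel_left₀ hr.ne']
    rw [this, ← hrd]
    field_simp
  rw [hn]
  calc _ ≤ r ^ 2 * y ^ 4 := by gcongr
    _ = _ := by rw [← hsr]; ring

end TestFunctionPreliminaries

/-! ### The ellipticity estimate -/

section Estimate

variable {N : ℕ}

/-- The operator `L (9/8 - 3/2 e ⊗ e)`, the second-order part of the modulus `√‖·‖` in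
`sqrt_norm_add_le`. -/
def radialOp (L : ℝ) (e : EN N) : EN N →L[ℝ] EN N :=
  L • ((9 / 8 : ℝ) • ContinuousLinearMap.id ℝ (EN N) -
    (3 / 2 : ℝ) • (innerSL ℝ e).smulRight e)

lemma radialOp_inner (L : ℝ) (e x y : EN N) :
    ⟪radialOp L e x, y⟫ = L * (9 / 8 * ⟪x, y⟫ - 3 / 2 * (⟪e, x⟫ * ⟪e, y⟫)) := by
  simp [radialOp, inner_sub_left, real_inner_smul_left]

lemma radialOp_symm (L : ℝ) (e x y : EN N) :
    ⟪radialOp L e x, y⟫ = ⟪x, radialOp L e y⟫ := by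
  rw [real_inner_comm (radialOp L e y) x, radialOp_inner, radialOp_inner, real_inner_comm x y]
  ring

set_option maxHeartbeats 800000 in
/-- The key comparison: the equation at the two contact points bounds the curvature `L` of the
modulus in terms of the gradient, because the matrix inequality forces `trace (Y - X)` to be of
size `L` and to dominate `‖Y‖`. -/
lemma curvature_le {Ω : Set (EN N)} {α a A C₁ θ C₂ ν : ℝ} (hα : -1 < α)
    {F : EN N → EN N → Mat N → ℝ}
    (hF2 : CondF2 Ω α a A F) (hF3 : CondF3 Ω α C₁ θ F) (hF4 : CondF4 Ω α C₂ ν F)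
    {b : EN N → EN N} {Mb Mg : ℝ} (hMg : 0 ≤ Mg) (hMb : 0 ≤ Mb)
    (hb : ∀ x ∈ closure Ω, ‖b x‖ ≤ Mb)
    {g : EN N → ℝ} (hg : ∀ x ∈ closure Ω, |g x| ≤ Mg) {z w p q : EN N} (hz : z ∈ closure Ω)
    (hw : w ∈ closure Ω) {X Y : EN N →L[ℝ] EN N} (hX : ∀ x y, ⟪X x, y⟫ = ⟪x, X y⟫)
    (hY : ∀ x y, ⟪Y x, y⟫ = ⟪x, Y y⟫) {L c : ℝ} (hL : 0 < L) (hc : 0 ≤ c) {e : EN N}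
    (he : ‖e‖ = 1)
    (hform : ∀ h k, ⟪X h, h⟫ - ⟪Y k, k⟫ ≤ ⟪radialOp L e (h - k), h - k⟫
      + c * (‖h‖ ^ 2 + ‖k‖ ^ 2))
    (hsub : g z ≤ F z p (matOf X) + ⟪b z, p⟫ * ‖p‖ ^ α)
    (hsup : F w q (matOf Y) + ⟪b w, q⟫ * ‖q‖ ^ α ≤ g w)
    (hp : 1 ≤ ‖p‖) (hqp : ‖q - p‖ ≤ ‖p‖ / 2)
    (hsmall : C₁ * ‖z - w‖ ^ θ + C₂ * (‖q - p‖ / ‖p‖) ^ ν ≤ a / 4) :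
    3 / 4 * a * L ≤ (2 * Mg + Mb * (1 + 2 ^ (1 + α))) * ‖p‖ + c * (2 * A * N + a) := by
  obtain ⟨ha, haA, hF2⟩ := hF2
  obtain ⟨hC₁, hθ, hF3⟩ := hF3
  obtain ⟨hC₂, hν, hF4⟩ := hF4
  have hpp : 0 < ‖p‖ := one_pos.trans_le hp
  have hp0 : p ≠ 0 := norm_pos_iff.mp hpp
  set I := ContinuousLinearMap.id ℝ (EN N)
  set W : EN N →L[ℝ] EN N := Y + (2 * c) • I - X with hW
  have hWa : ∀ x, ⟪W x, x⟫ = ⟪Y x, x⟫ + 2 * c * ‖x‖ ^ 2 - ⟪X x, x⟫ := by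
    intro x
    simp [hW, I, inner_sub_left, inner_add_left, real_inner_smul_left]
  have hWs : ∀ x y, ⟪W x, y⟫ = ⟪x, W y⟫ := by
    intro x y
    simp [hW, I, inner_sub_left, inner_add_left, real_inner_smul_left, inner_sub_right,
      inner_add_right, real_inner_smul_right, hX, hY]
  have hW0 : ∀ x, 0 ≤ ⟪W x, x⟫ := by
    intro x
    have := hform x x
    rw [sub_self, map_zero, inner_zero_left] at this
    rw [hWa]
    linarith
  set t := (matOf W).trace with ht
  have htL : 3 / 2 * L ≤ t := by
    have h1 := inner_le_trace hW0 e
    have h2 := hform e (-e)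
    rw [hWa, he] at h1
    rw [radialOp_inner, sub_neg_eq_add, norm_neg, map_neg, inner_neg_neg,
      real_inner_self_eq_norm_sq, inner_add_right, real_inner_self_eq_norm_sq, he,
      ← two_smul ℝ e, norm_smul, he, Real.norm_eq_abs] at h2
    norm_num at h1 h2
    linarith
  have hT : ∀ h, ⟪radialOp L e h, h⟫ ≤ 9 / 8 * L * ‖h‖ ^ 2 := by
    intro h
    rw [radialOp_inner, real_inner_self_eq_norm_sq]
    nlinarith [mul_nonneg hL.le (mul_self_nonneg ⟪e, h⟫)]
  have hnY : ‖Y‖ ≤ 2 * t + c := by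
    apply opNorm_le_of_form hY (by linarith)
    intro x
    have h1 := hform x 0
    have h2 := hform 0 x
    have h3 := hT x
    have h4 := hT (0 - x)
    have h5 := inner_le_trace hW0 x
    rw [hWa] at h5
    rw [zero_sub, norm_neg] at h4
    simp only [map_zero, inner_zero_left, sub_zero, zero_sub, norm_zero] at h1 h2
    have h6 := sq_nonneg ‖x‖
    have h7 : 3 / 2 * L * ‖x‖ ^ 2 ≤ t * ‖x‖ ^ 2 := by gcongr
    rw [abs_le]
    constructor <;> nlinarith [mul_nonneg hc h6, mul_nonneg hL.le h6]
  set pa := ‖p‖ ^ α with hpa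
  have hpap : 0 < pa := Real.rpow_pos_of_pos hpp _
  have hone : 1 ≤ ‖p‖ * pa := by
    have : ‖p‖ * pa = ‖p‖ ^ (1 + α) := by rw [Real.rpow_add hpp, Real.rpow_one]
    rw [this]
    exact Real.one_le_rpow hp (by linarith)
  have hq1 : ‖p‖ / 2 ≤ ‖q‖ := by
    have := norm_sub_norm_le p q
    rw [norm_sub_rev] at this
    linarith
  have hq2 : ‖q‖ ≤ 2 * ‖p‖ := by
    have := norm_sub_norm_le q p
    linarith
  have hqp0 : 0 < ‖q‖ := by linarith
  have hqa : ‖q‖ * ‖q‖ ^ α ≤ 2 ^ (1 + α) * (‖p‖ * pa) := by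
    have h1 : ‖q‖ * ‖q‖ ^ α = ‖q‖ ^ (1 + α) := by rw [Real.rpow_add hqp0, Real.rpow_one]
    have h2 : ‖p‖ * pa = ‖p‖ ^ (1 + α) := by rw [Real.rpow_add hpp, Real.rpow_one]
    rw [h1, h2, ← Real.mul_rpow (by norm_num) hpp.le]
    exact Real.rpow_le_rpow hqp0.le hq2 (by linarith)
  have hd1 : -(Mb * (‖p‖ * pa)) ≤ -(⟪b z, p⟫ * pa) := by
    have h1 : ⟪b z, p⟫ ≤ Mb * ‖p‖ :=
      (real_inner_le_norm _ _).trans (by gcongr; exact hb z hz)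
    nlinarith
  have hd2 : -(⟪b w, q⟫ * ‖q‖ ^ α) ≤ Mb * (2 ^ (1 + α) * (‖p‖ * pa)) := by
    have h1 : -⟪b w, q⟫ ≤ Mb * ‖q‖ := by
      have h2 := abs_real_inner_le_norm (b w) q
      have h3 : ‖b w‖ * ‖q‖ ≤ Mb * ‖q‖ := by gcongr; exact hb w hw
      linarith [(abs_le.mp h2).1]
    have h4 : 0 ≤ ‖q‖ ^ α := Real.rpow_nonneg hqp0.le _
    calc -(⟪b w, q⟫ * ‖q‖ ^ α) = -⟪b w, q⟫ * ‖q‖ ^ α := by ring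
      _ ≤ Mb * ‖q‖ * ‖q‖ ^ α := by gcongr
      _ = Mb * (‖q‖ * ‖q‖ ^ α) := by ring
      _ ≤ _ := by gcongr
  have hcI0 : ∀ x : EN N, 0 ≤ ⟪((2 * c) • I) x, x⟫ := by
    intro x
    simp only [smul_apply, I, ContinuousLinearMap.id_apply, real_inner_smul_left,
      real_inner_self_eq_norm_sq]
    positivity
  have hcIs : ∀ x y : EN N, ⟪((2 * c) • I) x, y⟫ = ⟪x, ((2 * c) • I) y⟫ := by
    intro x y
    simp only [smul_apply, I, ContinuousLinearMap.id_apply, real_inner_smul_left,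
      real_inner_smul_right]
  have hXW : X + W = Y + (2 * c) • I := by rw [hW]; abel
  have e1 := (hF2 z hz p hp0 _ _ (matOf_isSymm hX) (matOf_posSemidef hWs hW0)).1
  have e2 := (hF2 z hz p hp0 _ _ (matOf_isSymm hY) (matOf_posSemidef hcIs hcI0)).2
  rw [← matOf_add, hXW, ← ht] at e1
  rw [← matOf_add, trace_matOf_id] at e2
  have e3 := hF3 z hz w hw p hp0 _ (matOf_isSymm hY)
  have e4 := hF4 w hw p hp0 (q - p) hqp _ (matOf_isSymm hY)
  rw [matNorm_matOf] at e3 e4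
  rw [add_sub_cancel] at e4
  have e5 : ‖p‖ ^ (α - ν) * ‖q - p‖ ^ ν = pa * (‖q - p‖ / ‖p‖) ^ ν := by
    rw [Real.rpow_sub hpp, Real.div_rpow (norm_nonneg _) hpp.le]
    ring
  rw [mul_assoc C₂, e5] at e4
  have e3 := (abs_le.mp e3).2
  have e4 := (abs_le.mp e4).1
  have g1 := (abs_le.mp (hg z hz)).1
  have g2 := (abs_le.mp (hg w hw)).2
  -- the two error terms are absorbed in the ellipticity term
  have e6 : C₁ * ‖z - w‖ ^ θ * pa * ‖Y‖ + C₂ * (pa * (‖q - p‖ / ‖p‖) ^ ν) * ‖Y‖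
      ≤ pa * (a / 4 * (2 * t + c)) := by
    calc _ = pa * ((C₁ * ‖z - w‖ ^ θ + C₂ * (‖q - p‖ / ‖p‖) ^ ν) * ‖Y‖) := by ring
      _ ≤ _ := by gcongr
  have e7 : pa * (a * t) ≤ pa * ((2 * Mg + Mb * (1 + 2 ^ (1 + α))) * ‖p‖ + A * (2 * c * N)
      + a / 4 * (2 * t + c)) := by
    have : 2 * Mg ≤ 2 * Mg * (‖p‖ * pa) := le_mul_of_one_le_right (by linarith) hone
    linarith
  have e8 := le_of_mul_le_mul_left e7 hpap
  nlinarith [mul_nonneg hc ha.le]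

end Estimate

/-! ### Viscosity inequalities at a maximum of the doubled function -/

section Contact

variable {N : ℕ}

/-- A strict boundary inequality at `x₀` is stable under perturbation of the point and the slope; it
is void near interior points. -/
lemma exists_sign_radius {Ω : Set (EN N)} (hΩ : IsOpen Ω) {V : EN N → EN N} (hV : Continuous V)
    {x₀ P : EN N} (hx₀ : x₀ ∈ closure Ω) (hs : x₀ ∈ frontier Ω → 0 < ⟪P, V x₀⟫) :
    ∃ τ > 0, ∀ z p : EN N, ‖z - x₀‖ < τ → ‖p - P‖ < τ → z ∈ frontier Ω → 0 < ⟪p, V z⟫ := by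
  rw [closure_eq_self_union_frontier] at hx₀
  rcases hx₀ with hx | hx
  · obtain ⟨τ, hτ, h⟩ := Metric.isOpen_iff.mp hΩ x₀ hx
    refine ⟨τ, hτ, fun z p hz _ hzf => ?_⟩
    rw [hΩ.frontier_eq] at hzf
    exact absurd (h (by rwa [mem_ball, dist_eq_norm])) hzf.2
  · have hc : Continuous fun y : EN N × EN N => ⟪y.2, V y.1⟫ := by fun_prop
    have ho : ∀ᶠ y : EN N × EN N in 𝓝 (x₀, P), 0 < ⟪y.2, V y.1⟫ :=
      continuousAt_const.eventually_lt hc.continuousAt (hs hx)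
    obtain ⟨τ, hτ, h⟩ := Metric.eventually_nhds_iff.mp ho
    refine ⟨τ, hτ, fun z p hz hp _ => h (y := (z, p)) ?_⟩
    rw [Prod.dist_eq, dist_eq_norm, dist_eq_norm]
    exact max_lt hz hp

/-- At a maximum point of the doubled function `u x - u y - M √‖x - y‖ - κ (h x + h y)` off the
diagonal, with the gradients of the test function pointing strictly to the correct side on the
boundary, both viscosity inequalities hold at nearby points, with nearby gradients and with
Hessians controlled by the second-order part of the test function. -/
lemma exists_contact {Ω : Set (EN N)} (hΩ : IsOpen Ω) (hK : IsCompact (closure Ω))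
    {nv : EN N → EN N} {ρ : EN N → ℝ} (hρ : ContDiff ℝ 2 ρ)
    (hnv : ∀ x ∈ frontier Ω, gradient ρ x ≠ 0 ∧ nv x = ‖gradient ρ x‖⁻¹ • gradient ρ x)
    {F : EN N → EN N → Mat N → ℝ} {b : EN N → EN N} {α : ℝ} {g u : EN N → ℝ}
    (hu : ContinuousOn u (closure Ω))
    (hsub : IsSubSol Ω F b α (fun _ _ => 0) g (BNeu nv) u)
    (hsup : IsSuperSol Ω F b α (fun _ _ => 0) g (BNeu nv) u)
    {h : EN N → ℝ} {Ch κ M : ℝ} (hκ : 0 ≤ κ) (hM : 0 < M)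
    (hh : ∀ x ∈ closure Ω, ∀ y ∈ closure Ω,
        |h y - h x - ⟪gradient h x, y - x⟫| ≤ Ch * ‖y - x‖ ^ 2)
    {x₀ y₀ e : EN N} {r P : ℝ} (hx₀ : x₀ ∈ closure Ω) (hy₀ : y₀ ∈ closure Ω) (hne : x₀ ≠ y₀)
    (hr : r = ‖x₀ - y₀‖) (he : e = r⁻¹ • (x₀ - y₀)) (hP : P = M * (2 * √r)⁻¹)
    (hmax : ∀ x ∈ closure Ω, ∀ y ∈ closure Ω,
      u x - u y - M * √‖x - y‖ - κ * (h x + h y)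
        ≤ u x₀ - u y₀ - M * √‖x₀ - y₀‖ - κ * (h x₀ + h y₀))
    (hsx : x₀ ∈ frontier Ω → 0 < ⟪P • e + κ • gradient h x₀, gradient ρ x₀⟫)
    (hsy : y₀ ∈ frontier Ω → ⟪P • e - κ • gradient h y₀, gradient ρ y₀⟫ < 0)
    {τ : ℝ} (hτ : 0 < τ) :
    ∃ z ∈ closure Ω, ∃ w ∈ closure Ω, ‖z - x₀‖ < τ ∧ ‖w - y₀‖ < τ ∧ ∃ p q : EN N,
      ‖p - (P • e + κ • gradient h x₀)‖ < τ ∧ ‖q - (P • e - κ • gradient h y₀)‖ < τ ∧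
      ∃ X Y : EN N →L[ℝ] EN N, (∀ x y, ⟪X x, y⟫ = ⟪x, X y⟫) ∧ (∀ x y, ⟪Y x, y⟫ = ⟪x, Y y⟫) ∧
        (p ≠ 0 → g z ≤ F z p (matOf X) + ⟪b z, p⟫ * ‖p‖ ^ α) ∧
        (q ≠ 0 → F w q (matOf Y) + ⟪b w, q⟫ * ‖q‖ ^ α ≤ g w) ∧
        ∀ h k, ⟪X h, h⟫ - ⟪Y k, k⟫ ≤ ⟪radialOp (P / r) e (h - k), h - k⟫
          + (2 * κ * Ch + τ) * (‖h‖ ^ 2 + ‖k‖ ^ 2) := by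
  have hd : x₀ - y₀ ≠ 0 := sub_ne_zero.mpr hne
  have hrp : 0 < r := hr ▸ norm_pos_iff.mpr hd
  obtain ⟨τ₁, hτ₁, hs₁⟩ := exists_sign_radius hΩ hρ.continuous_gradient hx₀ hsx
  obtain ⟨τ₂, hτ₂, hs₂⟩ := exists_sign_radius hΩ hρ.continuous_gradient
    (P := -(P • e - κ • gradient h y₀)) hy₀ (fun hf => by
      rw [inner_neg_left]; linarith [hsy hf])
  set τ' := min τ (min τ₁ τ₂) with hτ'
  have hτ'p : 0 < τ' := by positivity
  have ht0 : τ' ≤ τ := min_le_left _ _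
  have ht1 : τ' ≤ τ₁ := (min_le_right _ _).trans (min_le_left _ _)
  have ht2 : τ' ≤ τ₂ := (min_le_right _ _).trans (min_le_right _ _)
  have hloc : ∀ᶠ z : EN N × EN N in 𝓝 (x₀, y₀), z.1 ∈ closure Ω → z.2 ∈ closure Ω →
      u z.1 - u z.2 ≤ u x₀ - u y₀ + (⟪P • e + κ • gradient h x₀, z.1 - x₀⟫
        - ⟪P • e - κ • gradient h y₀, z.2 - y₀⟫ +
        (⟪radialOp (P / r) e ((z.1 - x₀) - (z.2 - y₀)), (z.1 - x₀) - (z.2 - y₀)⟫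
          + 2 * κ * Ch * (‖z.1 - x₀‖ ^ 2 + ‖z.2 - y₀‖ ^ 2)) / 2) := by
    have ht : Tendsto (fun z : EN N × EN N => (z.1 - x₀) - (z.2 - y₀)) (𝓝 (x₀, y₀)) (𝓝 0) := by
      have : Continuous fun z : EN N × EN N => (z.1 - x₀) - (z.2 - y₀) := by fun_prop
      simpa using this.tendsto (x₀, y₀)
    filter_upwards [ht.eventually (sqrt_norm_add_le hd)] with z h1 hz1 hz2
    have h2 := hmax z.1 hz1 z.2 hz2
    have h3 := (abs_le.mp (hh x₀ hx₀ z.1 hz1)).2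
    have h4 := (abs_le.mp (hh y₀ hy₀ z.2 hz2)).2
    rw [show x₀ - y₀ + (z.1 - x₀ - (z.2 - y₀)) = z.1 - z.2 by abel, ← hr, ← he] at h1
    rw [← hr] at h2
    set k := z.1 - x₀ - (z.2 - y₀) with hk
    have h5 := mul_le_mul_of_nonneg_left h1 hM.le
    have h6 : M * (√r + (2 * √r)⁻¹ * ⟪e, k⟫
        + (2 * √r)⁻¹ / r * (9 / 8 * ‖k‖ ^ 2 - 3 / 2 * ⟪e, k⟫ ^ 2) / 2)
        = M * √r + P * ⟪e, k⟫ + ⟪radialOp (P / r) e k, k⟫ / 2 := by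
      rw [radialOp_inner, real_inner_self_eq_norm_sq, hP]
      ring
    have h7 := mul_le_mul_of_nonneg_left h3 hκ
    have h8 := mul_le_mul_of_nonneg_left h4 hκ
    have h9 : ⟪e, k⟫ = ⟪e, z.1 - x₀⟫ - ⟪e, z.2 - y₀⟫ := inner_sub_right _ _ _
    rw [h6, h9] at h5
    rw [inner_add_left, inner_sub_left (P • e), real_inner_smul_left, real_inner_smul_left,
      real_inner_smul_left, real_inner_smul_left]
    linarith
  obtain ⟨z, hz, w, hw, hzx, hwy, p, q, hp, hq, X, Y, hX, hY, htX, htY, hform⟩ :=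
    theorem_on_sums hK hu hu (radialOp_symm (P / r) e) hx₀ hy₀ hloc hτ'p
  refine ⟨z, hz, w, hw, hzx.trans_le ht0, hwy.trans_le ht0, p, q, hp.trans_le ht0,
    hq.trans_le ht0, X, Y, hX, hY, fun hp0 => ?_, fun hq0 => ?_, fun h' k => ?_⟩
  · refine hsub.of_touch hz hp0 hX htX fun hzf => ?_
    obtain ⟨h1, h2⟩ := hnv z hzf
    rw [h2, real_inner_smul_right]
    exact mul_pos (inv_pos.mpr (norm_pos_iff.mpr h1))
      (hs₁ z p (hzx.trans_le ht1) (hp.trans_le ht1) hzf)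
  · refine hsup.of_touch hw hq0 hY htY fun hwf => ?_
    obtain ⟨h1, h2⟩ := hnv w hwf
    rw [h2, real_inner_smul_right]
    have h3 := hs₂ w (-q) (hwy.trans_le ht2) (by
      rw [neg_sub_neg, norm_sub_rev]; exact hq.trans_le ht2) hwf
    rw [inner_neg_left] at h3
    exact mul_neg_of_pos_of_neg (inv_pos.mpr (norm_pos_iff.mpr h1)) (by linarith)
  · refine (hform h' k).trans ?_
    gcongr

end Contact

/-! ### The modulus of continuity -/

section Modulus

variable {N : ℕ}

lemma exists_small_rpow {a C₁ C₂ θ ν : ℝ} (ha : 0 < a) (hC₁ : 0 < C₁) (hC₂ : 0 < C₂)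
    (hθ : 0 < θ) (hν : 0 < ν) :
    ∃ δ > 0, δ ≤ 1 / 2 ∧ ∀ s t : ℝ, 0 ≤ s → s ≤ δ → 0 ≤ t → t ≤ δ →
      C₁ * s ^ θ + C₂ * t ^ ν ≤ a / 4 := by
  have hc : Tendsto (fun x : ℝ => C₁ * x ^ θ + C₂ * x ^ ν) (𝓝[>] 0) (𝓝 0) := by
    have h : ContinuousAt (fun x : ℝ => C₁ * x ^ θ + C₂ * x ^ ν) 0 :=
      (continuousAt_const.mul (Real.continuousAt_rpow_const _ _ (Or.inr hθ.le))).add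
        (continuousAt_const.mul (Real.continuousAt_rpow_const _ _ (Or.inr hν.le)))
    have h' := h.tendsto
    rw [Real.zero_rpow hθ.ne', Real.zero_rpow hν.ne', mul_zero, mul_zero, add_zero] at h'
    exact h'.mono_left nhdsWithin_le_nhds
  have h1 : ∀ᶠ x : ℝ in 𝓝[>] 0, C₁ * x ^ θ + C₂ * x ^ ν < a / 4 :=
    hc.eventually (gt_mem_nhds (by positivity))
  have h2 : ∀ᶠ x : ℝ in 𝓝[>] 0, x < 1 / 2 :=
    (gt_mem_nhds (by norm_num : (0 : ℝ) < 1 / 2)).filter_mono nhdsWithin_le_nhds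
  obtain ⟨δ, ⟨h3, h4⟩, h5⟩ := ((h1.and h2).and self_mem_nhdsWithin).exists
  refine ⟨δ, h5, h4.le, fun s t hs hsδ ht htδ => ?_⟩
  have h6 : s ^ θ ≤ δ ^ θ := Real.rpow_le_rpow hs hsδ hθ.le
  have h7 : t ^ ν ≤ δ ^ ν := Real.rpow_le_rpow ht htδ hν.le
  have h8 := mul_le_mul_of_nonneg_left h6 hC₁.le
  have h9 := mul_le_mul_of_nonneg_left h7 hC₂.le
  linarith

/-- A bounded corrector of size `δ` whose gradient on `{ρ = 0}` is that of `ρ`. -/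
def corrector (ρ : EN N → ℝ) (δ : ℝ) (x : EN N) : ℝ := δ * Real.sin (ρ x / δ)

lemma contDiff_corrector {ρ : EN N → ℝ} (hρ : ContDiff ℝ 2 ρ) (δ : ℝ) :
    ContDiff ℝ 2 (corrector ρ δ) :=
  contDiff_const.mul (Real.contDiff_sin.comp (hρ.div_const δ))

lemma abs_corrector_le (ρ : EN N → ℝ) {δ : ℝ} (hδ : 0 < δ) (x : EN N) :
    |corrector ρ δ x| ≤ δ := by
  rw [corrector, abs_mul, abs_of_pos hδ]
  exact mul_le_of_le_one_right hδ.le (Real.abs_sin_le_one _)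

lemma gradient_corrector {ρ : EN N → ℝ} (hρ : ContDiff ℝ 2 ρ) {δ : ℝ} (hδ : 0 < δ) {x : EN N}
    (hx : ρ x = 0) : gradient (corrector ρ δ) x = gradient ρ x := by
  have h1 : HasFDerivAt ρ (fderiv ℝ ρ x) x := (hρ.differentiable two_ne_zero x).hasFDerivAt
  have h2 := ((h1.mul_const δ⁻¹).sin).const_mul δ
  have h3 : HasFDerivAt (corrector ρ δ) (fderiv ℝ ρ x) x := by
    refine (h2.congr_fderiv ?_).congr_of_eventuallyEq (Eventually.of_forall fun y => ?_)
    · rw [hx, zero_mul, Real.cos_zero, one_smul, smul_smul, mul_inv_cancel₀ hδ.ne', one_smul]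
    · simp [corrector, div_eq_mul_inv]
  rw [gradient, gradient, h3.fderiv]

set_option maxHeartbeats 1000000 in
/-- Uniform equicontinuity: a modulus of continuity depending only on the data and on the bounds
for `u` and `g`. -/
lemma exists_modulus {Ω : Set (EN N)} {nv : EN N → EN N} (hΩ : IsC2Domain Ω nv)
    {α a A C₁ θ C₂ ν : ℝ} (hα : -1 < α) {F : EN N → EN N → Mat N → ℝ}
    (hF2 : CondF2 Ω α a A F) (hF3 : CondF3 Ω α C₁ θ F) (hF4 : CondF4 Ω α C₂ ν F)
    {b : EN N → EN N} {Mb Mg Mu : ℝ} (hMg : 0 ≤ Mg) (hMb : 0 ≤ Mb) (hMu : 1 ≤ Mu)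
    (hb : ∀ x ∈ closure Ω, ‖b x‖ ≤ Mb) {ε : ℝ} (hε : 0 < ε) :
    ∃ δ > 0, ∀ g u : EN N → ℝ, (∀ x ∈ closure Ω, |g x| ≤ Mg) →
      (∀ x ∈ closure Ω, |u x| ≤ Mu) → ContinuousOn u (closure Ω) →
      IsSubSol Ω F b α (fun _ _ => 0) g (BNeu nv) u →
      IsSuperSol Ω F b α (fun _ _ => 0) g (BNeu nv) u →
      ∀ x ∈ closure Ω, ∀ y ∈ closure Ω, ‖x - y‖ < δ → u x - u y ≤ ε := by
  obtain ⟨ho, -, hbd, ρ, hρ, hΩρ, hfr, hnv⟩ := hΩ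
  have hK : IsCompact (closure Ω) := hbd.isCompact_closure
  obtain ⟨R, hR⟩ := hK.isBounded.subset_closedBall (0 : EN N)
  have hfr0 : ∀ x ∈ frontier Ω, ρ x = 0 := fun x hx => by rw [hfr] at hx; exact hx
  have hρK : ∀ x ∈ closure Ω, ρ x ≤ 0 := by
    intro x hx
    rw [closure_eq_self_union_frontier] at hx
    rcases hx with hx | hx
    · rw [hΩρ] at hx; exact le_of_lt hx
    · exact (hfr0 x hx).le
  obtain ⟨Cρ, hCρ0, -, hCρ⟩ := exists_taylor_bound hρ R
  obtain ⟨cρ, hcρ, hcρ'⟩ : ∃ cρ > 0, ∀ x ∈ frontier Ω, cρ ≤ ‖gradient ρ x‖ ^ 2 := by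
    have hfc : IsCompact (frontier Ω) :=
      hK.of_isClosed_subset isClosed_frontier frontier_subset_closure
    rcases (frontier Ω).eq_empty_or_nonempty with h0 | h0
    · exact ⟨1, one_pos, fun x hx => by rw [h0] at hx; exact hx.elim⟩
    · obtain ⟨x, hx, hmin⟩ := hfc.exists_isMinOn h0
        (f := fun x => ‖gradient ρ x‖ ^ 2) (hρ.continuous_gradient.norm.pow 2).continuousOn
      have := norm_pos_iff.mpr (hnv x hx).1
      exact ⟨‖gradient ρ x‖ ^ 2, by positivity, fun y hy => hmin hy⟩
  set κ := (Cρ * Mu + 1) / cρ with hκ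
  have hMu0 : 0 < Mu := by linarith
  have hκp : 0 < κ := by positivity
  set δ' := ε / (8 * κ) with hδ'
  have hδ'p : 0 < δ' := by positivity
  have hκδ : κ * δ' = ε / 8 := by rw [hδ']; field_simp
  set h := corrector ρ δ' with hh
  have hhb : ∀ x, |h x| ≤ δ' := abs_corrector_le ρ hδ'p
  have hhg : ∀ x ∈ frontier Ω, gradient h x = gradient ρ x := fun x hx =>
    gradient_corrector hρ hδ'p (hfr0 x hx)
  obtain ⟨Ch, hCh0, hChg, hCh⟩ := exists_taylor_bound (contDiff_corrector hρ δ') R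
  rw [← hh] at hChg hCh
  set D := κ * Ch + 1 with hD
  have hDp : 0 < D := by positivity
  have ha : 0 < a := hF2.1
  have hA : 0 < A := ha.trans_le hF2.2.1
  obtain ⟨δ₁, hδ₁, hδ₁', hsm⟩ := exists_small_rpow ha hF3.1 hF4.1
    (half_pos one_pos |>.trans hF3.2.1.1) (half_pos one_pos |>.trans hF4.2.1.1)
  set G := 2 * Mg + Mb * (1 + 2 ^ (1 + α)) with hG
  have hG0 : 0 ≤ G := by positivity
  set c := 2 * κ * Ch + 1 with hc
  have hc0 : 0 ≤ c := by positivity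
  set B := 2 * G + c * (2 * A * N + a) with hB
  have hB0 : 0 ≤ B := by positivity
  set P₀ := 2 + 2 * D + 4 * D / δ₁ with hP₀
  have hP₀p : 0 < P₀ := by positivity
  set r₁ := min (δ₁ / 2) (a / (2 * (B + 1))) with hr₁
  have hr₁p : 0 < r₁ := by positivity
  set M := 4 * Mu * P₀ + 4 * Mu ^ 2 / r₁ + 1 with hM
  have hM1 : 4 * Mu * P₀ ≤ M := by
    have : 0 ≤ 4 * Mu ^ 2 / r₁ := by positivity
    linarith
  have hM2 : 4 * Mu ^ 2 / r₁ ≤ M := by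
    have : 0 ≤ 4 * Mu * P₀ := by positivity
    linarith
  have hM3 : 1 ≤ M := by
    have : 0 ≤ 4 * Mu ^ 2 / r₁ := by positivity
    have : 0 ≤ 4 * Mu * P₀ := by positivity
    linarith
  have hMp : 0 < M := by linarith
  refine ⟨(ε / (2 * M)) ^ 2, by positivity, fun g u hg hub hu hsub hsup => ?_⟩
  suffices hmain : ∀ x ∈ closure Ω, ∀ y ∈ closure Ω,
      u x - u y - M * √‖x - y‖ - κ * (h x + h y) ≤ 2 * κ * δ' by
    intro x hx y hy hxy
    have h1 := hmain x hx y hy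
    have h2 : √‖x - y‖ ≤ ε / (2 * M) := by
      rw [Real.sqrt_le_left (by positivity)]; exact hxy.le
    have h3 : M * √‖x - y‖ ≤ ε / 2 := by
      calc M * √‖x - y‖ ≤ M * (ε / (2 * M)) := by gcongr
        _ = ε / 2 := by field_simp
    have h4 : κ * (h x + h y) ≤ κ * (δ' + δ') := by
      gcongr
      · exact (abs_le.mp (hhb x)).2
      · exact (abs_le.mp (hhb y)).2
    linarith
  by_contra hcon
  push Not at hcon
  obtain ⟨x₁, hx₁, y₁, hy₁, h₁⟩ := hcon
  have hhc : Continuous h := (contDiff_corrector hρ δ').continuous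
  obtain ⟨⟨x₀, y₀⟩, ⟨hx₀, hy₀⟩, hmax'⟩ := (hK.prod hK).exists_isMaxOn ⟨(x₁, y₁), hx₁, hy₁⟩
    (f := fun z : EN N × EN N => u z.1 - u z.2 - M * √‖z.1 - z.2‖ - κ * (h z.1 + h z.2)) (by
      have h1 : ContinuousOn (fun z : EN N × EN N => u z.1) (closure Ω ×ˢ closure Ω) :=
        hu.comp continuousOn_fst fun z hz => hz.1
      have h2 : ContinuousOn (fun z : EN N × EN N => u z.2) (closure Ω ×ˢ closure Ω) :=
        hu.comp continuousOn_snd fun z hz => hz.2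
      exact ((h1.sub h2).sub (Continuous.continuousOn (by fun_prop))).sub
        (Continuous.continuousOn (by fun_prop)))
  simp only at hx₀ hy₀
  have hmax : ∀ x ∈ closure Ω, ∀ y ∈ closure Ω,
      u x - u y - M * √‖x - y‖ - κ * (h x + h y)
        ≤ u x₀ - u y₀ - M * √‖x₀ - y₀‖ - κ * (h x₀ + h y₀) := fun x hx y hy =>
    hmax' (show (x, y) ∈ closure Ω ×ˢ closure Ω from ⟨hx, hy⟩)
  have hpos : 2 * κ * δ' < u x₀ - u y₀ - M * √‖x₀ - y₀‖ - κ * (h x₀ + h y₀) :=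
    h₁.trans_le (hmax x₁ hx₁ y₁ hy₁)
  have hlow : -(2 * κ * δ') ≤ κ * (h x₀ + h y₀) := by
    have h1 : κ * (-δ' + -δ') ≤ κ * (h x₀ + h y₀) := by
      gcongr
      · exact (abs_le.mp (hhb x₀)).1
      · exact (abs_le.mp (hhb y₀)).1
    linarith
  have hne : x₀ ≠ y₀ := by
    rintro rfl
    rw [sub_self, sub_self, norm_zero, Real.sqrt_zero] at hpos
    linarith
  obtain ⟨r, hr⟩ : ∃ r, r = ‖x₀ - y₀‖ := ⟨_, rfl⟩
  have hrp : 0 < r := hr ▸ norm_pos_iff.mpr (sub_ne_zero.mpr hne)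
  obtain ⟨s, hs⟩ : ∃ s, s = √r := ⟨_, rfl⟩
  have hsp : 0 < s := hs ▸ Real.sqrt_pos.mpr hrp
  have hsr : s ^ 2 = r := hs ▸ Real.sq_sqrt hrp.le
  have hMs : M * s ≤ 2 * Mu := by
    have h1 := (abs_le.mp (hub x₀ hx₀)).2
    have h2 := (abs_le.mp (hub y₀ hy₀)).1
    rw [hs, hr]
    linarith
  have hs1 : s ≤ 2 * Mu := (le_mul_of_one_le_left hsp.le hM3).trans hMs
  have hrr : r ≤ r₁ := by
    have h1 : M * (M * r) ≤ M * r₁ * M := by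
      have h2 : 4 * Mu ^ 2 ≤ M * r₁ := (div_le_iff₀ hr₁p).mp hM2
      calc M * (M * r) = (M * s) ^ 2 := by rw [← hsr]; ring
        _ ≤ (2 * Mu) ^ 2 := by gcongr
        _ = 4 * Mu ^ 2 := by ring
        _ ≤ M * r₁ * 1 := by linarith
        _ ≤ M * r₁ * M := by gcongr
    have h3 : M * M * r ≤ M * M * r₁ := by linarith
    exact le_of_mul_le_mul_left h3 (by positivity)
  obtain ⟨P, hP⟩ : ∃ P, P = M * (2 * √r)⁻¹ := ⟨_, rfl⟩
  have hP2 : P * (2 * s) = M := by rw [hP, ← hs]; field_simp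
  have hPP₀ : P₀ ≤ P := by
    have h1 : P₀ * (2 * s) ≤ P * (2 * s) := by
      rw [hP2]
      calc P₀ * (2 * s) ≤ P₀ * (2 * (2 * Mu)) := by gcongr
        _ = 4 * Mu * P₀ := by ring
        _ ≤ M := hM1
    exact le_of_mul_le_mul_right h1 (by positivity)
  have hPp : 0 < P := hP₀p.trans_le hPP₀
  have hPr : P * r ≤ Mu := by
    have : P * r * 2 = M * s := by rw [← hP2, ← hsr]; ring
    linarith
  obtain ⟨e, he⟩ : ∃ e, e = r⁻¹ • (x₀ - y₀) := ⟨_, rfl⟩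
  have hen : ‖e‖ = 1 := by
    rw [he, norm_smul, norm_inv, Real.norm_eq_abs, abs_of_pos hrp, ← hr, inv_mul_cancel₀ hrp.ne']
  have hre : x₀ - y₀ = r • e := by rw [he, smul_smul, mul_inv_cancel₀ hrp.ne', one_smul]
  have hκc : ∀ x ∈ frontier Ω, Cρ * Mu + 1 ≤ κ * ‖gradient ρ x‖ ^ 2 := by
    intro x hx
    calc Cρ * Mu + 1 = κ * cρ := by rw [hκ]; field_simp
      _ ≤ _ := by gcongr; exact hcρ' x hx
  have hCP : P * (Cρ * r) ≤ Cρ * Mu := by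
    calc P * (Cρ * r) = Cρ * (P * r) := by ring
      _ ≤ _ := by gcongr
  -- on the boundary, `⟪e, ∇ρ⟫` has the right sign up to `Cρ r`, and the corrector does the rest
  have hsx : x₀ ∈ frontier Ω → 0 < ⟪P • e + κ • gradient h x₀, gradient ρ x₀⟫ := by
    intro hx
    have h1 := (abs_le.mp (hCρ x₀ (hR hx₀) y₀ (hR hy₀))).1
    rw [hfr0 x₀ hx, ← neg_sub x₀ y₀, norm_neg, ← hr, hre, inner_neg_right,
      real_inner_smul_right] at h1
    have h2 := hρK y₀ hy₀
    have h3 : -(Cρ * r) ≤ ⟪gradient ρ x₀, e⟫ := by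
      have : r * -(Cρ * r) ≤ r * ⟪gradient ρ x₀, e⟫ := by linarith only [h1, h2]
      exact le_of_mul_le_mul_left this hrp
    rw [hhg x₀ hx, inner_add_left, real_inner_smul_left, real_inner_smul_left,
      real_inner_self_eq_norm_sq, real_inner_comm]
    have h4 := hκc x₀ hx
    have h5 := mul_le_mul_of_nonneg_left h3 hPp.le
    linarith
  have hsy : y₀ ∈ frontier Ω → ⟪P • e - κ • gradient h y₀, gradient ρ y₀⟫ < 0 := by
    intro hy
    have h1 := (abs_le.mp (hCρ y₀ (hR hy₀) x₀ (hR hx₀))).1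
    rw [hfr0 y₀ hy, ← hr, hre, real_inner_smul_right] at h1
    have h2 := hρK x₀ hx₀
    have h3 : ⟪gradient ρ y₀, e⟫ ≤ Cρ * r := by
      have : r * ⟪gradient ρ y₀, e⟫ ≤ r * (Cρ * r) := by linarith only [h1, h2]
      exact le_of_mul_le_mul_left this hrp
    rw [hhg y₀ hy, inner_sub_left, real_inner_smul_left, real_inner_smul_left,
      real_inner_self_eq_norm_sq, real_inner_comm]
    have h4 := hκc y₀ hy
    have h5 := mul_le_mul_of_nonneg_left h3 hPp.le
    linarith
  set τ := min 1 (δ₁ / 4) with hτ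
  have hτp : 0 < τ := by positivity
  have hτ1 : τ ≤ 1 := min_le_left _ _
  have hτ2 : τ ≤ δ₁ / 4 := min_le_right _ _
  obtain ⟨z, hz, w, hw, hzx, hwy, p, q, hp, hq, X, Y, hX, hY, hsubz, hsupw, hform⟩ :=
    exists_contact ho hK hρ hnv hu hsub hsup hκp.le hMp
      (fun x hx y hy => hCh x (hR hx) y (hR hy)) hx₀ hy₀ hne hr he hP hmax hsx hsy hτp
  have hPe : ‖P • e‖ = P := by rw [norm_smul, hen, mul_one, Real.norm_eq_abs, abs_of_pos hPp]
  have hgx : ‖κ • gradient h x₀‖ ≤ κ * Ch := by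
    rw [norm_smul, Real.norm_eq_abs, abs_of_pos hκp]
    gcongr
    exact hChg x₀ (hR hx₀)
  have hgy : ‖κ • gradient h y₀‖ ≤ κ * Ch := by
    rw [norm_smul, Real.norm_eq_abs, abs_of_pos hκp]
    gcongr
    exact hChg y₀ (hR hy₀)
  have hpD : ‖p - P • e‖ ≤ D := by
    have : p - P • e = (p - (P • e + κ • gradient h x₀)) + κ • gradient h x₀ := by abel
    rw [this]
    exact (norm_add_le _ _).trans (by linarith)
  have hqD : ‖q - P • e‖ ≤ D := by
    have : q - P • e = (q - (P • e - κ • gradient h y₀)) - κ • gradient h y₀ := by abel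
    rw [this]
    exact (norm_sub_le _ _).trans (by linarith)
  have hqp : ‖q - p‖ ≤ 2 * D := by
    have : q - p = (q - P • e) - (p - P • e) := by abel
    rw [this]
    exact (norm_sub_le _ _).trans (by linarith)
  have hDδ : 0 < 4 * D / δ₁ := by positivity
  have hp1 : P / 2 ≤ ‖p‖ := by
    have h1 := norm_sub_norm_le (P • e) p
    rw [norm_sub_rev, hPe] at h1
    linarith
  have hp2 : ‖p‖ ≤ 2 * P := by
    have h1 := norm_sub_norm_le p (P • e)
    rw [hPe] at h1
    linarith
  have hp3 : 1 ≤ ‖p‖ := by linarith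
  have hratio : ‖q - p‖ ≤ δ₁ * ‖p‖ := by
    have h1 : 4 * D / δ₁ ≤ P := by linarith
    rw [div_le_iff₀ hδ₁] at h1
    have h2 := mul_le_mul_of_nonneg_left hp1 hδ₁.le
    linarith only [h1, h2, hqp]
  have hqp2 : ‖q - p‖ ≤ ‖p‖ / 2 := by
    have h2 := mul_le_mul_of_nonneg_right hδ₁' (norm_nonneg p)
    linarith only [h2, hratio]
  have hq1 : q ≠ 0 := by
    rintro rfl
    rw [zero_sub, norm_neg] at hqp2
    linarith
  have hp0 : p ≠ 0 := norm_pos_iff.mp (by linarith)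
  have hzw : ‖z - w‖ ≤ δ₁ := by
    have h1 : z - w = (z - x₀) + (x₀ - y₀) - (w - y₀) := by abel
    have h2 : ‖z - w‖ ≤ ‖z - x₀‖ + ‖x₀ - y₀‖ + ‖w - y₀‖ := by
      rw [h1]
      exact (norm_sub_le _ _).trans (by gcongr; exact norm_add_le _ _)
    have h3 : r₁ ≤ δ₁ / 2 := min_le_left _ _
    rw [← hr] at h2
    linarith
  have hfin := curvature_le hα hF2 hF3 hF4 hMg hMb hb hg hz hw hX hY (L := P / r) (c := c)
    (by positivity) hc0 hen
    (fun h' k => (hform h' k).trans (by gcongr; linarith only [hc, hτ1]))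
    (hsubz hp0) (hsupw hq1) hp3 hqp2
    (hsm _ _ (norm_nonneg _) hzw (by positivity)
      ((div_le_iff₀ (by linarith)).mpr hratio))
  have hr2 : 2 * (B + 1) * r ≤ a := by
    have h1 : r ≤ a / (2 * (B + 1)) := hrr.trans (min_le_right _ _)
    rw [le_div_iff₀ (by positivity)] at h1
    linarith
  have h1 : G * ‖p‖ + c * (2 * A * N + a) ≤ B * P := by
    have h2 : G * ‖p‖ ≤ G * (2 * P) := by gcongr
    have h3 : 0 ≤ c * (2 * A * N + a) := by positivity
    have h4 : 1 ≤ P := by linarith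
    have h5 := mul_le_mul_of_nonneg_left h4 h3
    rw [hB]
    linarith only [h2, h5]
  have h2 : 2 * (B + 1) * P ≤ a * (P / r) := by
    rw [mul_div_assoc', le_div_iff₀ hrp]
    have h3 := mul_le_mul_of_nonneg_right hr2 hPp.le
    linarith only [h3]
  have h3 : 0 ≤ B * P := by positivity
  linarith only [hfin, h1, h2, h3, hPp]

end Modulus

/-! ### Compactness -/

/-- Corollary `corcomp`: compactness of uniformly bounded sequences of
solutions of Neumann problems with uniformly bounded right-hand sides. -/
theorem stmt2 {N : ℕ} (Ω : Set (EN N)) (nv : EN N → EN N) (hΩ : IsC2Domain Ω nv)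
    (α a A C₁ θ C₂ ν : ℝ) (hα : -1 < α)
    (F : EN N → EN N → Mat N → ℝ)
    (hF2 : CondF2 Ω α a A F) (hF3 : CondF3 Ω α C₁ θ F) (hF4 : CondF4 Ω α C₂ ν F)
    (b : EN N → EN N) (hbc : ContinuousOn b Ω) (hb : ∃ M, ∀ x ∈ closure Ω, ‖b x‖ ≤ M)
    (g : ℕ → EN N → ℝ) (u : ℕ → EN N → ℝ)
    (hgc : ∀ n, ContinuousOn (g n) (closure Ω))
    (hgb : ∃ M, ∀ n, ∀ x ∈ closure Ω, |g n x| ≤ M)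
    (hub : ∃ M, ∀ n, ∀ x ∈ closure Ω, |u n x| ≤ M)
    (huc : ∀ n, ContinuousOn (u n) (closure Ω))
    (hsol : ∀ n, IsSubSol Ω F b α (fun _ _ => 0) (g n) (BNeu nv) (u n) ∧
      IsSuperSol Ω F b α (fun _ _ => 0) (g n) (BNeu nv) (u n)) :
    ∃ ψ : ℕ → ℕ, StrictMono ψ ∧ ∃ w : EN N → ℝ, ContinuousOn w (closure Ω) ∧
      TendstoUniformlyOn (fun k => u (ψ k)) w atTop (closure Ω) := by
  obtain ⟨Mb, hMb⟩ := hb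
  obtain ⟨Mg, hMg⟩ := hgb
  obtain ⟨Mu, hMu⟩ := hub
  have hmod : ∀ ε > 0, ∃ δ > 0, ∀ n, ∀ x ∈ closure Ω, ∀ y ∈ closure Ω, ‖x - y‖ < δ →
      u n x - u n y ≤ ε := by
    intro ε hε
    obtain ⟨δ, hδ, h⟩ := exists_modulus hΩ hα hF2 hF3 hF4 (le_max_left 0 Mg) (le_max_left 0 Mb)
      (le_max_left 1 Mu) (fun x hx => (hMb x hx).trans (le_max_right _ _)) hε
    exact ⟨δ, hδ, fun n => h (g n) (u n) (fun x hx => (hMg n x hx).trans (le_max_right _ _))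
      (fun x hx => (hMu n x hx).trans (le_max_right _ _)) (huc n) (hsol n).1 (hsol n).2⟩
  have : CompactSpace (closure Ω) :=
    isCompact_iff_compactSpace.mp hΩ.2.2.1.isCompact_closure
  let f : ℕ → BoundedContinuousFunction (closure Ω) ℝ := fun n =>
    BoundedContinuousFunction.mkOfCompact ⟨(closure Ω).domRestrict (u n), (huc n).domRestrict⟩
  have hf : ∀ n x, f n x = u n x := fun n x => rfl
  have hcomp : IsCompact (closure (range f)) := by
    refine BoundedContinuousFunction.arzela_ascoli (Icc (-Mu) Mu) isCompact_Icc (range f) ?_ ?_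
    · rintro _ x ⟨n, rfl⟩
      exact abs_le.mp (hMu n x x.2)
    · refine UniformEquicontinuous.equicontinuous (Metric.uniformEquicontinuous_iff.mpr ?_)
      intro ε hε
      obtain ⟨δ, hδ, h⟩ := hmod (ε / 2) (half_pos hε)
      refine ⟨δ, hδ, ?_⟩
      rintro x y hxy ⟨_, n, rfl⟩
      rw [Subtype.dist_eq, dist_eq_norm] at hxy
      have h1 := h n x x.2 y y.2 hxy
      have h2 := h n y y.2 x x.2 (by rwa [norm_sub_rev])
      change |u n x - u n y| < ε
      rw [abs_lt]
      constructor <;> linarith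
  obtain ⟨w, -, ψ, hψ, hw⟩ := hcomp.tendsto_subseq fun n => subset_closure (mem_range_self n)
  have hext : ∀ x : closure Ω, Function.extend Subtype.val w 0 (x : EN N) = w x := fun x =>
    Subtype.val_injective.extend_apply _ _ _
  refine ⟨ψ, hψ, Function.extend Subtype.val w 0, ?_, ?_⟩
  · rw [continuousOn_iff_continuous_domRestrict]
    exact w.continuous.congr fun x => (hext x).symm
  · have h1 := BoundedContinuousFunction.tendsto_iff_tendstoUniformly.mp hw
    rw [Metric.tendstoUniformlyOn_iff]
    intro ε hε
    filter_upwards [Metric.tendstoUniformly_iff.mp h1 ε hε] with k hk x hx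
    have := hk ⟨x, hx⟩
    rw [hext ⟨x, hx⟩]
    exact this
end
end

section
/- Let Ω be a C¹ bounded domain satisfying the interior sphere condition, let F satisfy (F1), (F2), (F3), let b and c be bounded and continuous on Ω, and let f : ∂Ω × ℝ → ℝ satisfy f(x,0) ≤ 0 for all x ∈ ∂Ω. If v ∈ LSC(Ω̄) is a non-negative viscosity supersolution of F(x,Dv,D²v) + b(x)·Dv|Dv|^α + c(x)|v|^α v = 0 in Ω with boundary condition f(x,v) + ⟨Dv, n(x)⟩ = 0 on ∂Ω, then either v ≡ 0 in Ω̄ or v > 0 in Ω̄. -/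
/-!
The proof is Hopf's barrier argument. Suppose `v` vanishes at a boundary point `x₀` of a ball
contained in `Ω` in which `v > 0`. On a ball of half the size, centred at `y` and tangent at `x₀`,
the function `w = m (exp (-k |x - y|²) - exp (-k R²))` is, for large `k`, a strict subsolution of
the equation outside the concentric ball of radius `R / 2` (`barrier_strict`), by the ellipticity (F2),
`F(x,p,0) = 0` and `α > -1`. For small `m` one has `w < v` on that inner ball, and
`w < 0 ≤ v` off the ball of radius `R`. Hence the minimum of `v - w` over `Ω̄`, which is at most its
value `0` at `x₀`, is attained where `R / 2 ≤ |x - y| ≤ R`; the supersolution property excludes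
every such point except `x₀`, so `w` touches `v` from below at `x₀` (`exists_touching`).

If `x₀ ∈ Ω`, this contradicts the equation. So the zero set of `v` in `Ω` is open: otherwise some
point near a zero has `v > 0`, and its nearest zero is such an `x₀`. The positivity set is open by
lower semicontinuity, and connectedness leaves two cases. If `v = 0` in `Ω`, lower semicontinuity
gives `v = 0` on `Ω̄`. If `v > 0` in `Ω`, a zero `x₀ ∈ ∂Ω` is reached by an interior sphere, and the
boundary condition fails for `w`: the equation part is strict, `f(x₀,0) ≤ 0`, and the gradient of
`w` at `x₀` is a negative multiple of the outward radius, which has positive inner product with the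
exterior normal (`inner_gradient_pos`).
-/

open Filter Set Metric
open scoped RealInnerProductSpace Topology NNReal

noncomputable section

/-! ### The radial barrier -/

/-- The Hopf barrier `m (exp (-k |x - y|²) - exp (-k R²))`: it vanishes on the sphere of radius `R`
about `y` and, for `k, m > 0`, is positive inside and negative outside. -/
def barrier {N : ℕ} (y : EN N) (R k m : ℝ) (x : EN N) : ℝ :=
  m * (Real.exp (-k * ‖x - y‖ ^ 2) - Real.exp (-k * R ^ 2))

/-- The factor `m exp (-k |x - y|²)` common to the derivatives of the barrier. -/
def barrierExp {N : ℕ} (y : EN N) (k m : ℝ) (x : EN N) : ℝ :=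
  m * Real.exp (-k * ‖x - y‖ ^ 2)

lemma contDiff_barrier {N : ℕ} (y : EN N) (R k m : ℝ) : ContDiff ℝ 2 (barrier y R k m) := by
  unfold barrier
  have h : ContDiff ℝ 2 (fun x : EN N => ‖x - y‖ ^ 2) :=
    (contDiff_id.sub contDiff_const).norm_sq ℝ
  exact contDiff_const.mul (((contDiff_const.mul h).exp).sub contDiff_const)

lemma hasFDerivAt_barrierExp {N : ℕ} (y : EN N) (k m : ℝ) (x : EN N) :
    HasFDerivAt (barrierExp y k m) ((-(2 * k * barrierExp y k m x)) • innerSL ℝ (x - y)) x := by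
  have h1 : HasFDerivAt (fun x : EN N => ‖x - y‖ ^ 2)
      (2 • (innerSL ℝ (x - y)).comp (ContinuousLinearMap.id ℝ (EN N))) x :=
    ((hasFDerivAt_id x).sub_const y).norm_sq
  have h2 := ((h1.const_mul (-k)).exp).const_mul m
  refine h2.congr_fderiv ?_
  ext h
  simp [barrierExp]
  ring

lemma hasFDerivAt_barrier {N : ℕ} (y : EN N) (R k m : ℝ) (x : EN N) :
    HasFDerivAt (barrier y R k m) ((-(2 * k * barrierExp y k m x)) • innerSL ℝ (x - y)) x := by
  have h := (hasFDerivAt_barrierExp y k m x).sub_const (m * Real.exp (-k * R ^ 2))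
  have e : barrier y R k m = fun x => barrierExp y k m x - m * Real.exp (-k * R ^ 2) := by
    funext z
    simp only [barrier, barrierExp]
    ring
  rw [e]
  exact h

lemma gradient_barrier {N : ℕ} (y : EN N) (R k m : ℝ) (x : EN N) :
    gradient (barrier y R k m) x = (-(2 * k * barrierExp y k m x)) • (x - y) := by
  apply HasGradientAt.gradient
  rw [hasGradientAt_iff_hasFDerivAt]
  refine (hasFDerivAt_barrier y R k m x).congr_fderiv ?_
  ext h
  simp [InnerProductSpace.toDual_apply_apply]

lemma hess_barrier {N : ℕ} (y : EN N) (R k m : ℝ) (x : EN N) :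
    hess (barrier y R k m) x =
      -((2 * k * barrierExp y k m x) • (1 : Mat N)) +
        (4 * k ^ 2 * barrierExp y k m x) • Matrix.vecMulVec (x - y).ofLp (x - y).ofLp := by
  have e : fderiv ℝ (barrier y R k m) =
      (fun x => -(2 * k * barrierExp y k m x)) • (fun x => innerSL ℝ (x - y)) := by
    funext z
    exact (hasFDerivAt_barrier y R k m z).fderiv
  have h1 : HasFDerivAt (fun x : EN N => innerSL ℝ (x - y)) (innerSL ℝ) x :=
    (innerSL ℝ (E := EN N)).hasFDerivAt.comp x ((hasFDerivAt_id x).sub_const y)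
  have h2 : HasFDerivAt (fun x => -(2 * k * barrierExp y k m x)) _ x :=
    ((hasFDerivAt_barrierExp y k m x).const_mul (2 * k)).neg
  have h3 := (h2.smul h1).fderiv
  ext i j
  simp only [hess, Matrix.of_apply, iteratedFDeriv_two_apply]
  rw [e, h3]
  change -(2 * k * barrierExp y k m x) *
      ⟪(EuclideanSpace.single i (1 : ℝ) : EN N), EuclideanSpace.single j (1 : ℝ)⟫ +
      -(2 * k * (-(2 * k * barrierExp y k m x) * ⟪x - y, EuclideanSpace.single i (1 : ℝ)⟫)) *
        ⟪x - y, EuclideanSpace.single j (1 : ℝ)⟫ = _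
  by_cases hij : i = j
  · subst hij
    simp [Matrix.vecMulVec_apply, EuclideanSpace.inner_single_right]
    ring
  · simp [Matrix.vecMulVec_apply, EuclideanSpace.inner_single_right, hij]
    ring

/-! ### The barrier is a strict subsolution on an annulus -/

/-- Pucci-type lower bound: (F1) gives `F(x,p,0) = 0`, and (F2) then controls `F` on a difference
of two positive semidefinite matrices. -/
lemma F_lower {N : ℕ} {Ω : Set (EN N)} {α a A : ℝ} {F : EN N → EN N → Mat N → ℝ}
    (hF1 : CondF1 Ω α F) (hF2 : CondF2 Ω α a A F) {x : EN N} (hx : x ∈ closure Ω)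
    {p : EN N} (hp : p ≠ 0) {P Q : Mat N} (hP : P.PosSemidef) (hQ : Q.PosSemidef) :
    ‖p‖ ^ α * (a * P.trace - A * Q.trace) ≤ F x p (-Q + P) := by
  have h0 : F x p 0 = 0 := by
    have := hF1 x hx 1 one_ne_zero 0 le_rfl p hp 0 Matrix.isSymm_zero
    simpa using this
  have hQs : Q.IsSymm := by
    have := hQ.isHermitian
    rwa [Matrix.IsHermitian, Matrix.conjTranspose_eq_transpose_of_trivial] at this
  have h1 := (hF2.2.2 x hx p hp (-Q) P hQs.neg hP).1
  have h2 := (hF2.2.2 x hx p hp (-Q) Q hQs.neg hQ).2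
  rw [neg_add_cancel, h0] at h2
  nlinarith

/-- Every term of the operator is compared with `(E s)^(α+1)`, where `E = barrierExp` and
`s = 2 k |x - y|`, so that `E s` is the length of the gradient of the barrier; the second order
term carries the extra factor `s ≥ k R`, which wins for large `k`. The number `u` plays the role of
the value of a function lying below the barrier. -/
lemma barrier_strict {N : ℕ} {Ω : Set (EN N)} {α a A : ℝ} {F : EN N → EN N → Mat N → ℝ}
    (hα : -1 < α) (hF1 : CondF1 Ω α F) (hF2 : CondF2 Ω α a A F) {x y : EN N}
    (hx : x ∈ closure Ω) {R k m Bd C c u : ℝ} {b : EN N} (hR : 0 < R) (hm : 0 < m)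
    (hr : R / 2 ≤ ‖x - y‖) (hb : ‖b‖ ≤ Bd) (hc : |c| ≤ C) (hu : 0 ≤ u)
    (huE : u ≤ barrierExp y k m x) (hk1 : 1 ≤ k * R)
    (hk2 : 2 * A * N / R + Bd + C + 1 ≤ a * (k * R)) :
    gradient (barrier y R k m) x ≠ 0 ∧
    0 < F x (gradient (barrier y R k m) x) (hess (barrier y R k m) x)
      + ⟪b, gradient (barrier y R k m) x⟫ * ‖gradient (barrier y R k m) x‖ ^ α
      + c * |u| ^ α * u := by
  have ha := hF2.1
  have hA : 0 < A := ha.trans_le hF2.2.1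
  have hk : 0 < k := by
    by_contra h
    have : k * R ≤ 0 := mul_nonpos_of_nonpos_of_nonneg (not_lt.1 h) hR.le
    linarith
  have hE : 0 < barrierExp y k m x := mul_pos hm (Real.exp_pos _)
  rw [hess_barrier]
  set E := barrierExp y k m x with hEdef
  set p := gradient (barrier y R k m) x with hpdef
  have hpeq : p = (-(2 * k * E)) • (x - y) := gradient_barrier y R k m x
  set r := ‖x - y‖ with hrdef
  have hr0 : 0 < r := by linarith
  set s := 2 * k * r with hs
  have hskR : k * R ≤ s := by nlinarith
  have hs1 : 1 ≤ s := hk1.trans hskR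
  have hpn : ‖p‖ = E * s := by
    rw [hpeq, norm_smul, norm_neg, Real.norm_of_nonneg (by positivity)]
    ring
  have hp0 : p ≠ 0 := by
    rw [← norm_pos_iff, hpn]
    positivity
  refine ⟨hp0, ?_⟩
  have hP : ((4 * k ^ 2 * E) • Matrix.vecMulVec (x - y).ofLp (x - y).ofLp).PosSemidef := by
    have := Matrix.posSemidef_vecMulVec_self_star (x - y).ofLp
    rw [star_trivial] at this
    exact this.smul (by positivity)
  have hQ : ((2 * k * E) • (1 : Mat N)).PosSemidef := Matrix.PosSemidef.one.smul (by positivity)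
  have hF := F_lower hF1 hF2 hx hp0 hP hQ
  have htP : ((4 * k ^ 2 * E) • Matrix.vecMulVec (x - y).ofLp (x - y).ofLp).trace = E * s ^ 2 := by
    rw [Matrix.trace_smul, Matrix.trace_vecMulVec]
    have : (x - y).ofLp ⬝ᵥ (x - y).ofLp = r ^ 2 := by
      rw [hrdef, EuclideanSpace.real_norm_sq_eq]
      simp [dotProduct, pow_two]
    rw [this, smul_eq_mul]
    ring
  have htQ : ((2 * k * E) • (1 : Mat N)).trace = 2 * k * E * N := by
    simp [Matrix.trace_smul]
  rw [htP, htQ] at hF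
  set T := ‖p‖ ^ α with hT
  have hpp : 0 < ‖p‖ := norm_pos_iff.2 hp0
  have hTpos : 0 < T := Real.rpow_pos_of_pos hpp _
  have hTE : T * (E * s) = (E * s) ^ (α + 1) := by
    rw [hT, hpn, Real.rpow_add_one (by positivity)]
  have hbt : -(Bd * (E * s)) * T ≤ ⟪b, p⟫ * T := by
    apply mul_le_mul_of_nonneg_right _ hTpos.le
    have h1 := (abs_le.1 (abs_real_inner_le_norm b p)).1
    have h2 : ‖b‖ * ‖p‖ ≤ Bd * (E * s) := by
      rw [← hpn]
      exact mul_le_mul_of_nonneg_right hb hpp.le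
    linarith
  have hC : 0 ≤ C := (abs_nonneg c).trans hc
  have hct : -(C * (T * (E * s))) ≤ c * |u| ^ α * u := by
    have hw : 0 ≤ |u| ^ α * u := mul_nonneg (Real.rpow_nonneg (abs_nonneg u) _) hu
    have hwle : |u| ^ α * u ≤ T * (E * s) := by
      rcases hu.eq_or_lt with h | h
      · rw [← h, mul_zero]
        positivity
      · rw [hTE, abs_of_pos h, ← Real.rpow_add_one h.ne']
        apply Real.rpow_le_rpow hu _ (by linarith)
        nlinarith
    have h1 : -C ≤ c := by linarith [(abs_le.1 hc).1]
    nlinarith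
  -- `2 k = s / r ≤ 2 s / R`
  have h2k : 2 * k * A * N ≤ s * (2 * A * N / R) := by
    have : s * (2 * A * N / R) = 2 * k * A * N * (2 * r / R) := by
      rw [hs]
      ring
    rw [this]
    apply le_mul_of_one_le_right (by positivity)
    rw [le_div_iff₀ hR]
    linarith
  have hfin : 1 ≤ a * s - 2 * A * N / R - Bd - C := by
    have := mul_le_mul_of_nonneg_left hskR ha.le
    linarith
  have hTEpos : 0 < T * E := by positivity
  have hmain : T * E * s ≤ T * E * (s * (a * s - 2 * A * N / R - Bd - C)) := by
    apply mul_le_mul_of_nonneg_left _ hTEpos.le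
    exact le_mul_of_one_le_right (by linarith) hfin
  have h2k' := mul_le_mul_of_nonneg_left h2k hTEpos.le
  have hpos : 0 < T * E * s := by positivity
  nlinarith

/-! ### Touching a zero from below -/

/-- A ball of half the radius, internally tangent at `x₀`, meets the sphere only at `x₀`. -/
lemma half_ball {N : ℕ} {y₀ x₀ p : EN N}
    (hp : ‖p - midpoint ℝ y₀ x₀‖ ≤ ‖x₀ - y₀‖ / 2) (hne : p ≠ x₀) : p ∈ ball y₀ ‖x₀ - y₀‖ := by
  have e : p - midpoint ℝ y₀ x₀ = (p - y₀) - (1 / 2 : ℝ) • (x₀ - y₀) := by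
    rw [midpoint_eq_smul_add, invOf_eq_inv]
    module
  have e2 : p - x₀ = (p - y₀) - (x₀ - y₀) := by abel
  have hpos : 0 < ‖p - x₀‖ ^ 2 := by
    have := norm_pos_iff.2 (sub_ne_zero.2 hne)
    positivity
  rw [mem_ball, dist_eq_norm]
  have h1 : ‖p - midpoint ℝ y₀ x₀‖ ^ 2 ≤ (‖x₀ - y₀‖ / 2) ^ 2 :=
    pow_le_pow_left₀ (norm_nonneg _) hp 2
  rw [e, norm_sub_sq_real, norm_smul, inner_smul_right] at h1
  rw [e2, norm_sub_sq_real] at hpos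
  norm_num at h1
  apply lt_of_pow_lt_pow_left₀ 2 (norm_nonneg _)
  nlinarith

/-- If `v` vanishes at a point `x₀` of the boundary of a ball inside which `v > 0`, then a barrier
touches `v` from below at `x₀`. The barrier lives on a smaller ball tangent at `x₀`;
comparison cannot fail at any other point, since such a point would lie in `Ω` and contradict the
supersolution property. -/
lemma exists_touching {N : ℕ} {Ω : Set (EN N)} {α a A : ℝ} {F : EN N → EN N → Mat N → ℝ}
    (hbd : Bornology.IsBounded Ω)
    (hα : -1 < α) (hF1 : CondF1 Ω α F) (hF2 : CondF2 Ω α a A F)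
    {b : EN N → EN N} {c : EN N → ℝ} (hb : ∃ M, ∀ x ∈ Ω, ‖b x‖ ≤ M)
    (hcb : ∃ M, ∀ x ∈ Ω, |c x| ≤ M)
    {v : EN N → ℝ} (hlsc : LowerSemicontinuousOn v (closure Ω))
    (hv0 : ∀ x ∈ closure Ω, 0 ≤ v x)
    (hsup : ∀ x₀ ∈ Ω, ∀ φ : EN N → ℝ, ContDiff ℝ 2 φ →
      IsLocalMinOn (fun x => v x - φ x) (closure Ω) x₀ → gradient φ x₀ ≠ 0 →
      F x₀ (gradient φ x₀) (hess φ x₀)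
        + ⟪b x₀, gradient φ x₀⟫ * ‖gradient φ x₀‖ ^ α + c x₀ * |v x₀| ^ α * v x₀ ≤ 0)
    {y₀ x₀ : EN N} (hx₀ : x₀ ∈ closure Ω) (hvx₀ : v x₀ = 0) (hne : x₀ ≠ y₀)
    (hball : ball y₀ ‖x₀ - y₀‖ ⊆ Ω) (hvpos : ∀ x ∈ ball y₀ ‖x₀ - y₀‖, 0 < v x) :
    ∃ φ : EN N → ℝ, ∃ t : ℝ, 0 < t ∧ ContDiff ℝ 2 φ ∧
      IsLocalMinOn (fun x => v x - φ x) (closure Ω) x₀ ∧ gradient φ x₀ = -(t • (x₀ - y₀)) ∧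
      gradient φ x₀ ≠ 0 ∧
      0 < F x₀ (gradient φ x₀) (hess φ x₀) + ⟪b x₀, gradient φ x₀⟫ * ‖gradient φ x₀‖ ^ α := by
  obtain ⟨Mb, hMb⟩ := hb
  obtain ⟨Mc, hMc⟩ := hcb
  have hd : 0 < ‖x₀ - y₀‖ := norm_pos_iff.2 (sub_ne_zero.2 hne)
  set y := midpoint ℝ y₀ x₀ with hy
  set R := ‖x₀ - y₀‖ / 2 with hRdef
  have hR : 0 < R := by positivity
  have hxy : x₀ - y = (1 / 2 : ℝ) • (x₀ - y₀) := by
    rw [hy, midpoint_eq_smul_add, invOf_eq_inv]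
    module
  have hxyR : ‖x₀ - y‖ = R := by
    rw [hxy, norm_smul, hRdef]
    norm_num
    ring
  have hsmall : ∀ p : EN N, ‖p - y‖ ≤ R → p ≠ x₀ → p ∈ ball y₀ ‖x₀ - y₀‖ :=
    fun p hp hpx => half_ball hp hpx
  -- a positive lower bound of `v` on the closed ball of radius `R / 2`
  obtain ⟨μ, hμ, hμv⟩ : ∃ μ : ℝ, 0 < μ ∧ ∀ x : EN N, ‖x - y‖ ≤ R / 2 → μ ≤ v x := by
    have hsub : ∀ x ∈ closedBall y (R / 2), x ∈ ball y₀ ‖x₀ - y₀‖ := by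
      intro x hx
      rw [mem_closedBall, dist_eq_norm] at hx
      refine hsmall x (by linarith) ?_
      rintro rfl
      linarith
    obtain ⟨z, hz, hzmin⟩ := LowerSemicontinuousOn.exists_isMinOn
      (s := closedBall y (R / 2)) ⟨y, mem_closedBall_self (by positivity)⟩
      (isCompact_closedBall y (R / 2))
      (hlsc.mono fun x hx => subset_closure (hball (hsub x hx)))
    refine ⟨v z, hvpos z (hsub z hz), fun x hx => hzmin ?_⟩
    rwa [mem_closedBall, dist_eq_norm]
  have ha := hF2.1
  -- `b x₀` is included in the bound since `x₀` may lie outside `Ω`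
  set Bd := max Mb ‖b x₀‖ with hBd
  set C := max Mc 0 with hC
  obtain ⟨k, hk1, hk2⟩ : ∃ k : ℝ, 1 ≤ k * R ∧ 2 * A * N / R + Bd + C + 1 ≤ a * (k * R) := by
    refine ⟨max 1 ((2 * A * N / R + Bd + C + 1) / a) / R, ?_, ?_⟩
    · rw [div_mul_cancel₀ _ hR.ne']
      exact le_max_left _ _
    · rw [div_mul_cancel₀ _ hR.ne']
      have := mul_le_mul_of_nonneg_left (le_max_right 1 ((2 * A * N / R + Bd + C + 1) / a)) ha.le
      rwa [mul_div_cancel₀ _ ha.ne'] at this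
  have hk : 0 < k := by
    by_contra h
    have : k * R ≤ 0 := mul_nonpos_of_nonpos_of_nonneg (not_lt.1 h) hR.le
    linarith
  set m := μ / 2 with hm
  have hmpos : 0 < m := by positivity
  have hwE : ∀ x, barrier y R k m x ≤ barrierExp y k m x := by
    intro x
    have := mul_pos hmpos (Real.exp_pos (-k * R ^ 2))
    simp only [barrier, barrierExp]
    linarith
  have hwm : ∀ x, barrier y R k m x ≤ m := by
    intro x
    refine (hwE x).trans ?_
    apply mul_le_of_le_one_right hmpos.le
    apply Real.exp_le_one_iff.2
    have : 0 ≤ k * ‖x - y‖ ^ 2 := by positivity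
    linarith
  have hwx₀ : barrier y R k m x₀ = 0 := by simp [barrier, hxyR]
  have hwneg : ∀ x, 0 ≤ barrier y R k m x → ‖x - y‖ ≤ R := by
    intro x hx
    have h1 := nonneg_of_mul_nonneg_right hx hmpos
    have h2 := Real.exp_le_exp.1 (sub_nonneg.1 h1)
    refine le_of_pow_le_pow_left₀ two_ne_zero hR.le ?_
    nlinarith
  have hwc : Continuous (barrier y R k m) := (contDiff_barrier y R k m).continuous
  obtain ⟨z, hz, hzmin⟩ := LowerSemicontinuousOn.exists_isMinOn
    (f := fun x => v x - barrier y R k m x) ⟨x₀, hx₀⟩ hbd.isCompact_closure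
    (by
      have := hlsc.add (hwc.neg.continuousOn (s := closure Ω)).lowerSemicontinuousOn
      simpa [sub_eq_add_neg] using this)
  have hz0 : v z - barrier y R k m z ≤ 0 := by
    have := hzmin hx₀
    simpa [hvx₀, hwx₀] using this
  have hvz := hv0 z hz
  have hzR : ‖z - y‖ ≤ R := hwneg z (by linarith)
  have hzr : R / 2 ≤ ‖z - y‖ := by
    by_contra h
    have h1 := hμv z (not_le.1 h).le
    have h2 := hwm z
    linarith
  have hzx : z = x₀ := by
    by_contra hzx
    have hzΩ := hball (hsmall z hzR hzx)
    obtain ⟨hg, hpos⟩ := barrier_strict (c := c z) (u := v z) (b := b z) (Bd := Bd) (C := C)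
      hα hF1 hF2 hz hR hmpos hzr
      ((hMb z hzΩ).trans (le_max_left _ _)) ((hMc z hzΩ).trans (le_max_left _ _)) hvz
      (by linarith [hwE z]) hk1 hk2
    exact absurd (hsup z hzΩ _ (contDiff_barrier y R k m) (hzmin.localize) hg) (not_le.2 hpos)
  subst hzx
  obtain ⟨hg, hpos⟩ := barrier_strict (c := 0) (u := 0) (b := b z) (Bd := Bd) (C := C)
      hα hF1 hF2 hz hR hmpos hzr (le_max_right _ _) (by simp [hC]) le_rfl
      (mul_pos hmpos (Real.exp_pos _)).le hk1 hk2
  have hE : 0 < barrierExp y k m z := mul_pos hmpos (Real.exp_pos _)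
  refine ⟨barrier y R k m, k * barrierExp y k m z, by positivity, contDiff_barrier y R k m,
    hzmin.localize, ?_, hg, by simpa using hpos⟩
  rw [gradient_barrier, hxy, smul_smul, ← neg_smul]
  congr 1
  ring

/-- If a function is negative in a ball and vanishes at a boundary point where it has a nonzero
gradient, that gradient makes an acute angle with the outward radius. -/
lemma inner_gradient_pos {N : ℕ} {ρ : EN N → ℝ} {x₀ y : EN N} (hρ : DifferentiableAt ℝ ρ x₀)
    (h0 : ρ x₀ = 0) (hg : gradient ρ x₀ ≠ 0) (hball : ∀ x ∈ ball y ‖x₀ - y‖, ρ x < 0)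
    (hne : x₀ ≠ y) :
    0 < ⟪x₀ - y, gradient ρ x₀⟫ := by
  by_contra hcon
  rw [not_lt] at hcon
  set g := gradient ρ x₀ with hgdef
  set z := x₀ - y with hz
  -- `d` enters the ball, while `ρ` increases along it
  set d := g - z with hd
  have hz0 : 0 < ‖z‖ := norm_pos_iff.2 (sub_ne_zero.2 hne)
  have hg0 : 0 < ‖g‖ := norm_pos_iff.2 hg
  have hdz : ⟪z, d⟫ < 0 := by
    rw [hd, inner_sub_right, real_inner_self_eq_norm_sq]
    nlinarith
  have hgd : 0 < ⟪g, d⟫ := by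
    rw [hd, inner_sub_right, real_inner_self_eq_norm_sq, real_inner_comm]
    nlinarith
  have hder : HasDerivAt (fun t : ℝ => ρ (x₀ + t • d)) ⟪g, d⟫ 0 := by
    have h1 : HasFDerivAt ρ (InnerProductSpace.toDual ℝ (EN N) g) (x₀ + (0 : ℝ) • d) := by
      rw [zero_smul, add_zero]
      exact hρ.hasGradientAt.hasFDerivAt
    have h2 : HasDerivAt (fun t : ℝ => x₀ + t • d) d 0 := by
      simpa using ((hasDerivAt_id (0 : ℝ)).smul_const d).const_add x₀
    exact h1.comp_hasDerivAt (0 : ℝ) h2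
  have hev : ∀ᶠ t in 𝓝[>] (0 : ℝ), ρ (x₀ + t • d) < 0 := by
    have hdd : 0 < ‖d‖ ^ 2 + 1 := by positivity
    have : Ioo (0 : ℝ) (-⟪z, d⟫ / (‖d‖ ^ 2 + 1)) ∈ 𝓝[>] (0 : ℝ) :=
      Ioo_mem_nhdsGT (div_pos (neg_pos.2 hdz) hdd)
    filter_upwards [this] with t ht
    apply hball
    rw [mem_ball, dist_eq_norm]
    apply lt_of_pow_lt_pow_left₀ 2 (norm_nonneg _)
    have e : x₀ + t • d - y = z + t • d := by
      rw [hz]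
      abel
    rw [e, norm_add_sq_real, inner_smul_right, norm_smul, Real.norm_of_nonneg ht.1.le]
    have h3 := (lt_div_iff₀ hdd).1 ht.2
    have ht0 := ht.1
    nlinarith [mul_lt_mul_of_pos_left h3 ht0, sq_nonneg t]
  have hslope := (hasDerivAt_iff_tendsto_slope_zero.1 hder).mono_left
    (nhdsWithin_mono (0 : ℝ) (fun t (ht : t ∈ Ioi (0 : ℝ)) => ne_of_gt ht))
  have hle : ⟪g, d⟫ ≤ 0 := by
    refine le_of_tendsto hslope ?_
    filter_upwards [hev, self_mem_nhdsWithin] with t ht ht0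
    have : (0 : ℝ) < t := ht0
    simp only [zero_add, zero_smul, add_zero, h0, sub_zero, smul_eq_mul]
    exact mul_nonpos_of_nonneg_of_nonpos (inv_nonneg.2 this.le) ht.le
  linarith

/-! ### The strong minimum principle -/

/-- Proposition `p1`: strong minimum principle. A non-negative supersolution
of the boundary value problem with `f(x,0) ≤ 0` is either identically zero or positive on `Ω̄`. -/
theorem stmt4 {N : ℕ} (Ω : Set (EN N)) (nv : EN N → EN N)
    (hΩ : IsC1Domain Ω nv) (hsp : InteriorSphereCond Ω)
    (α a A C₁ θ : ℝ) (hα : -1 < α)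
    (F : EN N → EN N → Mat N → ℝ)
    (hF1 : CondF1 Ω α F) (hF2 : CondF2 Ω α a A F) (hF3 : CondF3 Ω α C₁ θ F)
    (b : EN N → EN N) (c : EN N → ℝ)
    (hbc : ContinuousOn b Ω) (hb : ∃ M, ∀ x ∈ Ω, ‖b x‖ ≤ M)
    (hcc : ContinuousOn c Ω) (hcb : ∃ M, ∀ x ∈ Ω, |c x| ≤ M)
    (f : EN N → ℝ → ℝ) (hf : ∀ x ∈ frontier Ω, f x 0 ≤ 0)
    (v : EN N → ℝ) (hlsc : LowerSemicontinuousOn v (closure Ω))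
    (hv0 : ∀ x ∈ closure Ω, 0 ≤ v x)
    (hsup : IsSuperSol Ω F b α (fun x r => c x * |r| ^ α * r) (fun _ => 0)
      (fun x r p => f x r + ⟪p, nv x⟫) v) :
    (∀ x ∈ closure Ω, v x = 0) ∨ (∀ x ∈ closure Ω, 0 < v x) := by
  obtain ⟨hopen, hconn, hbd, ρ, hρ, hΩρ, hfr, hnv⟩ := hΩ
  have hsupin := hsup.1
  have hsupbd := hsup.2.2.1
  -- the zero set of `v` in `Ω` is open
  have hZopen : IsOpen {x | x ∈ Ω ∧ v x = 0} := by
    rw [isOpen_iff_mem_nhds]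
    rintro z ⟨hz, hvz⟩
    obtain ⟨ε, hε, hεΩ⟩ := Metric.isOpen_iff.1 hopen z hz
    refine Filter.mem_of_superset (ball_mem_nhds z (show 0 < ε / 3 by positivity)) ?_
    intro x₁ hx₁
    rw [mem_ball] at hx₁
    have hx₁Ω : x₁ ∈ Ω := hεΩ (mem_ball.2 (by linarith))
    refine ⟨hx₁Ω, ?_⟩
    by_contra hvx₁
    have hsub : closedBall x₁ (dist z x₁) ⊆ Ω := by
      intro p hp
      apply hεΩ
      rw [mem_closedBall] at hp
      rw [mem_ball]
      have := dist_triangle p x₁ z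
      rw [dist_comm z x₁] at hp
      linarith
    -- the zero of `v` nearest to `x₁`
    obtain ⟨x₀, ⟨hx₀mem, hx₀v⟩, hx₀min⟩ : ∃ x₀, (x₀ ∈ closedBall x₁ (dist z x₁) ∧ v x₀ ≤ 0) ∧
        ∀ p, p ∈ closedBall x₁ (dist z x₁) → v p ≤ 0 → dist x₀ x₁ ≤ dist p x₁ := by
      have hcl : IsCompact (closedBall x₁ (dist z x₁) ∩ {p | v p ≤ 0}) := by
        have hl := hlsc.mono (hsub.trans subset_closure)
        obtain ⟨u, hu, hu'⟩ := lowerSemicontinuousOn_iff_preimage_Iic.1 hl 0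
        have : closedBall x₁ (dist z x₁) ∩ {p | v p ≤ 0} = closedBall x₁ (dist z x₁) ∩ u := hu'
        rw [this]
        exact (isCompact_closedBall _ _).inter_right hu
      obtain ⟨x₀, hx₀, hmin⟩ := hcl.exists_isMinOn
        ⟨z, mem_closedBall.2 le_rfl, hvz.le⟩ (f := fun p => dist p x₁) (by fun_prop)
      exact ⟨x₀, hx₀, fun p hp hvp => hmin ⟨hp, hvp⟩⟩
    have hx₀Ω : x₀ ∈ Ω := hsub hx₀mem
    have hvx₀ : v x₀ = 0 := le_antisymm hx₀v (hv0 x₀ (subset_closure hx₀Ω))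
    have hne : x₀ ≠ x₁ := by
      rintro rfl
      exact hvx₁ hvx₀
    have hin : ∀ p ∈ ball x₁ ‖x₀ - x₁‖, p ∈ closedBall x₁ (dist z x₁) := by
      intro p hp
      rw [mem_ball, ← dist_eq_norm] at hp
      exact mem_closedBall.2 (hp.le.trans hx₀mem)
    obtain ⟨φ, t, ht, hφ, hmin, hgr, hg0, hpos⟩ := exists_touching hbd hα hF1 hF2 hb hcb hlsc hv0
      hsupin (subset_closure hx₀Ω) hvx₀ hne (fun p hp => hsub (hin p hp)) (by
        intro p hp
        by_contra hvp
        have h1 := hx₀min p (hin p hp) (not_lt.1 hvp)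
        rw [mem_ball, ← dist_eq_norm] at hp
        linarith)
    have := hsupin x₀ hx₀Ω φ hφ hmin hg0
    simp only [hvx₀, mul_zero, add_zero] at this
    linarith
  have hPopen : IsOpen {x | x ∈ Ω ∧ 0 < v x} := by
    rw [isOpen_iff_mem_nhds]
    rintro z ⟨hz, hvz⟩
    have h1 := hlsc z (subset_closure hz) 0 hvz
    have h2 := hopen.mem_nhds hz
    have h3 : closure Ω ∈ 𝓝 z := Filter.mem_of_superset h2 subset_closure
    rw [nhdsWithin_eq_nhds.2 h3] at h1
    filter_upwards [h1, h2] with x hx hxΩ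
    exact ⟨hxΩ, hx⟩
  rcases IsPreconnected.subset_or_subset hZopen hPopen
    (Set.disjoint_left.2 fun x hx hx' => hx'.2.ne' hx.2)
    (fun x hx => (hv0 x (subset_closure hx)).eq_or_lt.elim
      (fun h => Or.inl ⟨hx, h.symm⟩) (fun h => Or.inr ⟨hx, h⟩)) hconn.isPreconnected with hZ | hP
  · left
    intro x hx
    by_contra hvx
    have hpos : 0 < v x := lt_of_le_of_ne (hv0 x hx) (Ne.symm hvx)
    have h1 := (hlsc x hx 0 hpos).filter_mono (nhdsWithin_mono x subset_closure)
    have : (𝓝[Ω] x).NeBot := mem_closure_iff_nhdsWithin_neBot.1 hx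
    obtain ⟨p, hp, hpΩ⟩ := (h1.and self_mem_nhdsWithin).exists
    exact (ne_of_gt hp) (hZ hpΩ).2
  · right
    intro x hx
    by_cases hxΩ : x ∈ Ω
    · exact (hP hxΩ).2
    have hxf : x ∈ frontier Ω := by
      rw [hopen.frontier_eq]
      exact ⟨hx, hxΩ⟩
    by_contra hvx
    have hvx0 : v x = 0 := le_antisymm (not_lt.1 hvx) (hv0 x hx)
    obtain ⟨R, hR, y, hy, rfl, hball⟩ := hsp x hxf
    have hne : x ≠ y := by
      rintro rfl
      exact hxΩ hy
    obtain ⟨φ, t, ht, hφ, hmin, hgr, hg0, hpos⟩ := exists_touching hbd hα hF1 hF2 hb hcb hlsc hv0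
      hsupin hx hvx0 hne hball (fun p hp => (hP (hball hp)).2)
    obtain ⟨hgρ, hnx⟩ := hnv x hxf
    have hin : 0 < ⟪x - y, gradient ρ x⟫ := by
      refine inner_gradient_pos (hρ.differentiable one_ne_zero x) ?_ hgρ ?_ hne
      · rw [hfr] at hxf
        exact hxf
      · intro p hp
        have := hball hp
        rw [hΩρ] at this
        exact this
    have hB : f x (v x) + ⟪gradient φ x, nv x⟫ < 0 := by
      have h1 := hf x hxf
      rw [hgr, hnx, hvx0, inner_neg_left, inner_smul_left, inner_smul_right]
      have : 0 < t * (‖gradient ρ x‖⁻¹ * ⟪x - y, gradient ρ x⟫) :=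
        mul_pos ht (mul_pos (inv_pos.2 (norm_pos_iff.2 hgρ)) hin)
      simp only [conj_trivial]
      linarith
    have := hsupbd x hxf φ hφ hmin hg0
    rcases le_max_iff.1 this with h | h
    · simp only [hvx0, mul_zero, add_zero] at h
      linarith
    · exact absurd h (not_le.2 hB)
end
end
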